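/- arXiv:1606.06318 — 2 statements merged into one kernel-verified Lean document; each statement's English description precedes it below -/
import Mathlib

section
/- (Uniform localization from below.) Let ρ > 0, c > 0, x₀ ≥ 0, b₀ > 0, and let F : ℝ → ℝ be continuously differentiable with F(0) = 0 and −b₀ ≤ F'(y) ≤ 0 for all y ∈ ℝ. Fix K₁ ≥ 1 and K₂ > 0, and let L > ρ + 2c/ρ be a constant satisfying e^{L−ρ} − (2c/ρ)·e^{-L} ≥ 2c·K₂. For T ≥ 1 set η(T) = e^{-L·T}, and let N(T) = K₁·β_T^{-2}·e^{2ρ(T+β_T)} where β_T is the unique positive solution of log β + b₀·β = −T·b₀. Then η(T) < N(T), and for every T ≥ 1, every admissible control u and every trajectory x associated with u such that ∫₀^∞ e^{-ρt} u(t) dt ≤ K₁, ∫₀^∞ e^{-ρt} x(t) dt ≤ K₂, and t ↦ e^{-ρt}(log u(t) − c·x(t)²) is Lebesgue integrable on [0,∞), there exist an admissible control u' and a trajectory x' associated with u' such that u'(t) = max(min(u(t), N(T)), η(T)) for a.e. t ∈ [0,T], the function t ↦ e^{-ρt}(log u'(t) − c·x'(t)²) is Lebesgue integrable on [0,∞),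 and B(u',x') ≥ B(u,x). -/
open MeasureTheory Filter

/-- A control `u` is admissible: measurable, locally integrable on `[0,∞)`,
and positive almost everywhere on `[0,∞)`. -/
def Admissible (u : ℝ → ℝ) : Prop :=
  Measurable u ∧ (∀ T : ℝ, 0 < T → IntegrableOn u (Set.Icc 0 T)) ∧
    (∀ᵐ t ∂(volume.restrict (Set.Ici (0:ℝ))), 0 < u t)

/-- `x` is a trajectory associated with the control `u`, dynamics `F` and
initial state `x₀`. -/
def Trajectory (F : ℝ → ℝ) (x₀ : ℝ) (u x : ℝ → ℝ) : Prop :=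
  ContinuousOn x (Set.Ici 0) ∧
    ∀ t : ℝ, 0 ≤ t → x t = x₀ + ∫ s in (0:ℝ)..t, (F (x s) + u s)

/-- The objective functional `B(u,x) = ∫₀^∞ e^{-ρt}(log u(t) - c x(t)²) dt`. -/
noncomputable def objective (ρ c : ℝ) (u x : ℝ → ℝ) : ℝ :=
  ∫ t in Set.Ioi (0:ℝ), Real.exp (-ρ * t) * (Real.log (u t) - c * (x t) ^ 2)

/-- Integrability of the integrand of the objective functional. -/
def ObjIntegrable (ρ c : ℝ) (u x : ℝ → ℝ) : Prop :=
  IntegrableOn (fun t => Real.exp (-ρ * t) * (Real.log (u t) - c * (x t) ^ 2))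
    (Set.Ioi (0:ℝ))


namespace ULB

open Set

/-- Order comparison principle. -/
lemma cmp {a b : ℝ} {h : ℝ → ℝ} (hc : ContinuousOn h (Icc a b)) (ha : 0 ≤ h a)
    (hm : ∀ s t, a ≤ s → s ≤ t → t ≤ b → (∀ r ∈ Ioc s t, h r < 0) → h s ≤ h t) :
    ∀ t ∈ Icc a b, 0 ≤ h t := by
  intro t ht
  by_contra hneg
  push Not at hneg
  set A : Set ℝ := {s | s ∈ Icc a t ∧ 0 ≤ h s} with hA
  have hct : ContinuousOn h (Icc a t) := hc.mono (Icc_subset_Icc_right ht.2)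
  have hAcl : IsClosed A := by
    have := hct.preimage_isClosed_of_isClosed isClosed_Icc (isClosed_Ici (a := (0:ℝ)))
    exact this
  have hne : A.Nonempty := ⟨a, ⟨⟨le_rfl, ht.1⟩, ha⟩⟩
  have hbd : BddAbove A := ⟨t, fun s hs => hs.1.2⟩
  have hmem : sSup A ∈ A := hAcl.csSup_mem hne hbd
  have := hm (sSup A) t hmem.1.1 hmem.1.2 ht.2 (by
    intro r hr
    by_contra hcon
    push Not at hcon
    have : r ≤ sSup A := le_csSup hbd ⟨⟨hmem.1.1.trans hr.1.le, hr.2⟩, hcon⟩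
    linarith [hr.1])
  linarith [hmem.2]

/-- Trajectory on `[0,S]`. -/
def TrajOn (F : ℝ → ℝ) (x₀ : ℝ) (u x : ℝ → ℝ) (S : ℝ) : Prop :=
  ContinuousOn x (Icc 0 S) ∧
    ∀ t : ℝ, 0 ≤ t → t ≤ S → x t = x₀ + ∫ s in (0:ℝ)..t, (F (x s) + u s)

lemma TrajOn.mono {F : ℝ → ℝ} {x₀ : ℝ} {u x : ℝ → ℝ} {S R : ℝ} (h : TrajOn F x₀ u x S)
    (hR : R ≤ S) : TrajOn F x₀ u x R :=
  ⟨h.1.mono (Icc_subset_Icc_right hR), fun t h0 h1 => h.2 t h0 (h1.trans hR)⟩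

lemma ii {u : ℝ → ℝ} {S s t : ℝ} (hu : IntegrableOn u (Icc 0 S)) (hs : 0 ≤ s) (hst : s ≤ t)
    (ht : t ≤ S) : IntervalIntegrable u volume s t := by
  rw [intervalIntegrable_iff_integrableOn_Icc_of_le hst]
  exact hu.mono_set (Icc_subset_Icc hs ht)

lemma TrajOn.Fint {F : ℝ → ℝ} {x₀ : ℝ} {u x : ℝ → ℝ} {S : ℝ} (h : TrajOn F x₀ u x S)
    (hF : Continuous F) : IntegrableOn (fun s => F (x s)) (Icc 0 S) :=
  (hF.comp_continuousOn h.1).integrableOn_Icc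

lemma TrajOn.incr {F : ℝ → ℝ} {x₀ : ℝ} {u x : ℝ → ℝ} {S : ℝ} (h : TrajOn F x₀ u x S)
    (hF : Continuous F) (hu : IntegrableOn u (Icc 0 S)) {s t : ℝ} (hs : 0 ≤ s) (hst : s ≤ t)
    (ht : t ≤ S) : x t = x s + ∫ r in s..t, (F (x r) + u r) := by
  rw [h.2 t (hs.trans hst) ht, h.2 s hs (hst.trans ht), add_assoc,
    intervalIntegral.integral_add_adjacent_intervals]
  · exact ii ((h.Fint hF).add hu) le_rfl hs (hst.trans ht)
  · exact ii ((h.Fint hF).add hu) hs hst ht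

lemma ae_sub {u : ℝ → ℝ} {S : ℝ} (hup : ∀ᵐ t ∂(volume.restrict (Icc (0:ℝ) S)), 0 ≤ u t)
    {s t : ℝ} (hs : 0 ≤ s) (ht : t ≤ S) :
    ∀ᵐ r ∂volume, r ∈ Ioc s t → 0 ≤ u r := by
  rw [ae_restrict_iff' measurableSet_Icc] at hup
  filter_upwards [hup] with r hr hrm
  exact hr ⟨hs.trans hrm.1.le, hrm.2.trans ht⟩

lemma int_nonneg {f : ℝ → ℝ} {s t : ℝ} (hst : s ≤ t)
    (h : ∀ᵐ r ∂volume, r ∈ Ioc s t → 0 ≤ f r) : 0 ≤ ∫ r in s..t, f r := by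
  apply intervalIntegral.integral_nonneg_of_ae_restrict hst
  rw [Filter.EventuallyLE, ← restrict_Ioc_eq_restrict_Icc, ae_restrict_iff' measurableSet_Ioc]
  exact h

lemma TrajOn.nonneg {F : ℝ → ℝ} {x₀ : ℝ} {u x : ℝ → ℝ} {S : ℝ} (h : TrajOn F x₀ u x S)
    (hF : Continuous F) (hFa : Antitone F) (hF0 : F 0 = 0) (hx₀ : 0 ≤ x₀)
    (hu : IntegrableOn u (Icc 0 S))
    (hup : ∀ᵐ t ∂(volume.restrict (Icc (0:ℝ) S)), 0 ≤ u t) :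
    ∀ t ∈ Icc 0 S, 0 ≤ x t := by
  intro t0 ht0
  refine cmp h.1 ?_ ?_ t0 ht0
  · rw [h.2 0 le_rfl (ht0.1.trans ht0.2)]; simpa
  · intro s t hs hst ht hneg
    rw [h.incr hF hu hs hst ht]
    have : 0 ≤ ∫ r in s..t, (F (x r) + u r) := by
      apply int_nonneg hst
      filter_upwards [ae_sub hup hs ht] with r hr hrm
      have := hFa (hneg r hrm).le
      linarith [hr hrm]
    linarith

lemma TrajOn.le_of {F : ℝ → ℝ} {x₀ : ℝ} {u x y : ℝ → ℝ} {S : ℝ} (hx : TrajOn F x₀ u x S)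
    (hy : TrajOn F x₀ u y S) (hF : Continuous F) (hFa : Antitone F)
    (hu : IntegrableOn u (Icc 0 S)) : ∀ t ∈ Icc 0 S, x t ≤ y t := by
  intro t0 ht0
  have : 0 ≤ y t0 - x t0 := by
    refine cmp (h := fun t => y t - x t) (hy.1.sub hx.1) ?_ ?_ t0 ht0
    · show 0 ≤ y 0 - x 0
      rw [hx.2 0 le_rfl (ht0.1.trans ht0.2), hy.2 0 le_rfl (ht0.1.trans ht0.2)]; simp
    · intro s t hs hst ht hneg
      show y s - x s ≤ y t - x t
      rw [hx.incr hF hu hs hst ht, hy.incr hF hu hs hst ht]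
      have : 0 ≤ (∫ r in s..t, (F (y r) + u r)) - ∫ r in s..t, (F (x r) + u r) := by
        rw [← intervalIntegral.integral_sub]
        · apply int_nonneg hst
          filter_upwards with r hrm
          have := hFa (sub_neg.1 (hneg r hrm)).le
          linarith
        · exact ii ((hy.Fint hF).add hu) hs hst ht
        · exact ii ((hx.Fint hF).add hu) hs hst ht
      linarith
  linarith

lemma exists_trajOn {F : ℝ → ℝ} {x₀ b₀ : ℝ} {u : ℝ → ℝ} (S : ℝ) (hS : 0 ≤ S)
    (hFa : Antitone F) (hF0 : F 0 = 0) (hb₀ : 0 ≤ b₀) (hFl : LipschitzWith (Real.toNNReal b₀) F)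
    (hx₀ : 0 ≤ x₀) (hu : IntegrableOn u (Icc 0 S))
    (hup : ∀ᵐ t ∂(volume.restrict (Icc (0:ℝ) S)), 0 ≤ u t) :
    ∃ x, TrajOn F x₀ u x S := by
  have hF : Continuous F := hFl.continuous
  set U : ℝ → ℝ := fun t => x₀ + ∫ s in (0:ℝ)..t, u s with hU
  have hUc : ContinuousOn U (Icc 0 S) := by
    have := intervalIntegral.continuousOn_primitive_interval (a := 0) (b := S) (f := u)
      (μ := volume) (by rwa [uIcc_of_le hS])
    rw [uIcc_of_le hS] at this
    exact continuousOn_const.add this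
  set R := U S with hR
  have hUR : ∀ t ∈ Icc 0 S, U t ≤ R := by
    intro t ht
    have h1 : U S = U t + ∫ s in t..S, u s := by
      simp only [hU]
      rw [add_assoc, intervalIntegral.integral_add_adjacent_intervals]
      · exact ii hu le_rfl ht.1 ht.2
      · exact ii hu ht.1 ht.2 le_rfl
    have h2 : 0 ≤ ∫ s in t..S, u s := int_nonneg ht.2 (ae_sub hup ht.1 le_rfl)
    rw [hR, h1]; linarith
  have hR0 : 0 ≤ R := by
    have := hUR 0 ⟨le_rfl, hS⟩
    simp only [hU, intervalIntegral.integral_same, add_zero] at this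
    linarith
  set cl : ℝ → ℝ := fun y => max 0 (min y R) with hcl
  have hclm : Monotone cl := fun a b hab => max_le_max le_rfl (min_le_min hab le_rfl)
  have hcll : LipschitzWith 1 cl := (LipschitzWith.id.min_const R).const_max 0
  set G : ℝ → ℝ := fun y => F (cl y) with hG
  have hGa : Antitone G := hFa.comp_monotone hclm
  have hGl : LipschitzWith (Real.toNNReal b₀) G := by
    have := hFl.comp hcll
    rwa [mul_one] at this
  have hG0 : G 0 = 0 := by simp [hG, hcl, hR0, hF0]
  have hGb : ∀ y, ‖G y‖ ≤ b₀ * R := by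
    intro y
    have h1 := hFl.dist_le_mul (cl y) 0
    rw [hF0, dist_zero_right, dist_zero_right, Real.coe_toNNReal _ hb₀] at h1
    refine h1.trans ?_
    have h2 : ‖cl y‖ ≤ R := by
      rw [Real.norm_eq_abs, abs_of_nonneg (le_max_left _ _)]
      exact max_le hR0 (min_le_right _ _)
    exact mul_le_mul_of_nonneg_left h2 hb₀
  have hPL : IsPicardLindelof (fun t z => G (z + U t)) (tmin := 0) (tmax := S)
      ⟨0, le_rfl, hS⟩ (0:ℝ) (Real.toNNReal (b₀ * R * S)) 0 (Real.toNNReal (b₀ * R))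
      (Real.toNNReal b₀) := by
    refine ⟨?_, ?_, ?_, ?_⟩
    · intro t ht
      have := hGl.comp ((LipschitzWith.id (α := ℝ)).add (LipschitzWith.const (U t)))
      simp only [add_zero, mul_one] at this
      exact this.lipschitzOnWith
    · intro z _
      exact hGl.continuous.comp_continuousOn (continuousOn_const.add hUc)
    · intro t ht z _
      rw [Real.coe_toNNReal _ (by positivity)]
      exact hGb _
    · rw [Real.coe_toNNReal _ (by positivity), Real.coe_toNNReal _ (by positivity)]
      simp [hS]
  obtain ⟨α, hα⟩ := ODE.FunSpace.exists_isFixedPt_next hPL (x := 0) (by simp)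
  set z : ℝ → ℝ := (ODE.FunSpace.next hPL (x := 0) (by simp) α).compProj with hzd
  have hzc : Continuous z := ODE.FunSpace.continuous_compProj _
  have hz : ∀ t ∈ Icc 0 S, z t = ∫ s in (0:ℝ)..t, G (z s + U s) := by
    intro t ht
    have h1 : z t = ODE.picard (fun t z => G (z + U t)) 0 0 z t := by
      rw [hzd, ODE.FunSpace.compProj_apply, ODE.FunSpace.next_apply, hα, projIcc_of_mem _ ht]
    rw [h1, ODE.picard_apply, zero_add]
  set x : ℝ → ℝ := fun t => z t + U t with hx
  have hxc : ContinuousOn x (Icc 0 S) := hzc.continuousOn.add hUc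
  have hxG : TrajOn G x₀ u x S := by
    refine ⟨hxc, fun t ht0 htS => ?_⟩
    rw [intervalIntegral.integral_add]
    · simp only [hx, hU]
      rw [hz t ⟨ht0, htS⟩]; ring
    · exact ii (hGl.continuous.comp_continuousOn hxc).integrableOn_Icc le_rfl ht0 htS
    · exact ii hu le_rfl ht0 htS
  have hx0 := hxG.nonneg hGl.continuous hGa hG0 hx₀ hu hup
  have hxR : ∀ t ∈ Icc 0 S, x t ≤ R := by
    intro t ht
    have h1 : 0 ≤ ∫ s in (0:ℝ)..t, -G (z s + U s) := by
      apply int_nonneg ht.1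
      filter_upwards with r hr
      have h2 := hGa (hx0 r ⟨hr.1.le, hr.2.trans ht.2⟩)
      rw [hG0] at h2
      simp only [hx] at h2
      linarith
    rw [intervalIntegral.integral_neg] at h1
    have h2 := hUR t ht
    have h3 := hz t ht
    show z t + U t ≤ R
    linarith
  refine ⟨x, hxc, fun t ht0 htS => ?_⟩
  rw [hxG.2 t ht0 htS]
  congr 1
  apply intervalIntegral.integral_congr
  intro s hs
  rw [uIcc_of_le ht0] at hs
  have hs' : s ∈ Icc 0 S := ⟨hs.1, hs.2.trans htS⟩
  have : cl (x s) = x s := by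
    simp only [hcl]
    rw [min_eq_left (hxR s hs'), max_eq_right (hx0 s hs')]
  simp only [hG, this]

lemma exists_traj {F : ℝ → ℝ} {x₀ b₀ : ℝ} {u : ℝ → ℝ}
    (hFa : Antitone F) (hF0 : F 0 = 0) (hb₀ : 0 ≤ b₀) (hFl : LipschitzWith (Real.toNNReal b₀) F)
    (hx₀ : 0 ≤ x₀) (hu : Admissible u) : ∃ x, Trajectory F x₀ u x := by
  have hui : ∀ n : ℕ, IntegrableOn u (Icc 0 ((n:ℝ) + 1)) := fun n => hu.2.1 _ (by positivity)
  have hex : ∀ n : ℕ, ∃ x, TrajOn F x₀ u x ((n:ℝ) + 1) := by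
    intro n
    apply exists_trajOn _ (by positivity) hFa hF0 hb₀ hFl hx₀ (hui n)
    have := ae_restrict_of_ae_restrict_of_subset (fun t ht => ht.1 : Icc (0:ℝ) ((n:ℝ)+1) ⊆ Ici 0)
      hu.2.2
    filter_upwards [this] with t ht using ht.le
  choose X hX using hex
  have hF := hFl.continuous
  have key : ∀ n m : ℕ, ∀ t : ℝ, 0 ≤ t → t ≤ n + 1 → t ≤ m + 1 → X n t = X m t := by
    intro n m t h0 hn hm
    have a := (hX n).mono hn
    have b := (hX m).mono hm
    have hut : IntegrableOn u (Icc 0 t) := (hui n).mono_set (Icc_subset_Icc_right hn)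
    exact le_antisymm (a.le_of b hF hFa hut t ⟨h0, le_rfl⟩) (b.le_of a hF hFa hut t ⟨h0, le_rfl⟩)
  set x : ℝ → ℝ := fun t => X ⌊t⌋₊ t with hx
  have hxe : ∀ n : ℕ, EqOn x (X n) (Icc 0 ((n:ℝ) + 1)) := by
    intro n t ht
    exact key _ _ t ht.1 (Nat.lt_floor_add_one t).le ht.2
  refine ⟨x, ?_, ?_⟩
  · intro t ht
    have h1 : t < (⌊t⌋₊ : ℝ) + 1 := Nat.lt_floor_add_one t
    have h2 : ContinuousOn x (Icc 0 ((⌊t⌋₊:ℝ) + 1)) := (hX ⌊t⌋₊).1.congr (hxe _)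
    refine (h2 t ⟨ht, h1.le⟩).mono_of_mem_nhdsWithin ?_
    rw [← Ici_inter_Iic]
    exact inter_mem self_mem_nhdsWithin (mem_nhdsWithin_of_mem_nhds (Iic_mem_nhds h1))
  · intro t ht
    have h1 : t < (⌊t⌋₊ : ℝ) + 1 := Nat.lt_floor_add_one t
    rw [hxe ⌊t⌋₊ ⟨ht, h1.le⟩, (hX _).2 t ht h1.le]
    congr 1
    apply intervalIntegral.integral_congr
    intro s hs
    rw [uIcc_of_le ht] at hs
    simp only [hxe ⌊t⌋₊ ⟨hs.1, hs.2.trans h1.le⟩]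


lemma traj_on {F : ℝ → ℝ} {x₀ : ℝ} {u x : ℝ → ℝ} (h : Trajectory F x₀ u x) (S : ℝ) :
    TrajOn F x₀ u x S :=
  ⟨h.1.mono (fun _ ht => ht.1), fun t h0 _ => h.2 t h0⟩

/-- Comparison of `y = x - x' + m` with a subsolution `φ`. -/
lemma ycmp {F : ℝ → ℝ} {x₀ b₀ : ℝ} {u u' x x' q d φ : ℝ → ℝ} {a b : ℝ}
    (hF : Continuous F) (hFa : Antitone F) (hFl : ∀ y z, z ≤ y → F z - F y ≤ b₀ * (y - z))
    (hx : Trajectory F x₀ u x) (hx' : Trajectory F x₀ u' x')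
    (hui : IntegrableOn u (Icc 0 b)) (hui' : IntegrableOn u' (Icc 0 b))
    (hq : Integrable q) (hq0 : ∀ t, 0 ≤ q t) (hd : Integrable d)
    (huu : ∀ t, 0 < t → u' t = u t + q t - d t)
    (ha : 0 ≤ a) (hφc : ContinuousOn φ (Icc a b)) (hφ0 : ∀ t ∈ Icc a b, 0 ≤ φ t)
    (hφ : ∀ s t, a ≤ s → s ≤ t → t ≤ b →
      φ t - φ s ≤ ∫ r in s..t, (d r - b₀ * φ r))
    (hst : φ a ≤ x a - x' a + ∫ r in (0:ℝ)..a, q r) :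
    ∀ t ∈ Icc a b, φ t ≤ x t - x' t + ∫ r in (0:ℝ)..t, q r := by
  have T1 := traj_on hx b
  have T2 := traj_on hx' b
  have hqc : Continuous (fun t => ∫ r in (0:ℝ)..t, q r) :=
    intervalIntegral.continuous_primitive (fun a b => hq.intervalIntegrable) 0
  have hsub : Icc a b ⊆ Icc 0 b := Icc_subset_Icc_left ha
  intro t0 ht0
  have := cmp (a := a) (b := b) (h := fun t => x t - x' t + (∫ r in (0:ℝ)..t, q r) - φ t)
    ((((T1.1.mono hsub).sub (T2.1.mono hsub)).add hqc.continuousOn).sub hφc)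
    (by simpa using hst) ?_ t0 ht0
  · simpa using this
  intro s t hs hst ht hneg
  have hs0 := ha.trans hs
  show x s - x' s + (∫ r in (0:ℝ)..s, q r) - φ s ≤ x t - x' t + (∫ r in (0:ℝ)..t, q r) - φ t
  rw [T1.incr hF hui hs0 hst ht, T2.incr hF hui' hs0 hst ht,
    ← intervalIntegral.integral_add_adjacent_intervals (a := 0) (b := s) (c := t)
      hq.intervalIntegrable hq.intervalIntegrable]
  have h1 := hφ s t hs hst ht
  have i1 : IntervalIntegrable (fun r => F (x r) + u r) volume s t :=
    ii ((T1.Fint hF).add hui) hs0 hst ht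
  have i2 : IntervalIntegrable (fun r => F (x' r) + u' r) volume s t :=
    ii ((T2.Fint hF).add hui') hs0 hst ht
  have i3 : IntervalIntegrable q volume s t := hq.intervalIntegrable
  have i4 : IntervalIntegrable (fun r => d r - b₀ * φ r) volume s t := by
    apply hd.intervalIntegrable.sub
    apply IntervalIntegrable.const_mul
    apply ContinuousOn.intervalIntegrable
    rw [uIcc_of_le hst]
    exact hφc.mono (Icc_subset_Icc hs ht)
  have h2 : 0 ≤ (∫ r in s..t, (F (x r) + u r)) - (∫ r in s..t, (F (x' r) + u' r))
      + (∫ r in s..t, q r) - ∫ r in s..t, (d r - b₀ * φ r) := by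
    rw [← intervalIntegral.integral_sub i1 i2, ← intervalIntegral.integral_add (i1.sub i2) i3,
      ← intervalIntegral.integral_sub ((i1.sub i2).add i3) i4]
    apply int_nonneg hst
    filter_upwards with r hr
    have hr0 : 0 < r := lt_of_le_of_lt hs0 hr.1
    have hn := hneg r hr
    have hm : 0 ≤ ∫ w in (0:ℝ)..r, q w :=
      intervalIntegral.integral_nonneg hr0.le (fun w _ => hq0 w)
    have hp := hφ0 r ⟨hs.trans hr.1.le, hr.2.trans ht⟩
    have h3 : x r - φ r ≤ x' r := by linarith
    have h4 := hFa h3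
    have h5 := hFl (x r) (x r - φ r) (by linarith)
    have h6 := huu r hr0
    have h7 : b₀ * (x r - (x r - φ r)) = b₀ * φ r := by ring
    linarith
  linarith

lemma key_cmp {F : ℝ → ℝ} {x₀ b₀ T β D : ℝ} {u u' x x' p q : ℝ → ℝ}
    (hF : Continuous F) (hFa : Antitone F) (hFl : ∀ y z, z ≤ y → F z - F y ≤ b₀ * (y - z))
    (hb₀ : 0 < b₀) (hT : 0 ≤ T) (hβ : 0 < β) (hβe : β = Real.exp (-(b₀ * (T + β))))
    (hx : Trajectory F x₀ u x) (hx' : Trajectory F x₀ u' x')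
    (hu : Admissible u) (hu' : Admissible u')
    (hq : Integrable q) (hq0 : ∀ t, 0 ≤ q t)
    (hp : Integrable p) (hp0 : ∀ t, 0 ≤ p t) (hpT : ∀ t, T < t → p t = 0)
    (hD : D = ∫ r in (0:ℝ)..T, p r)
    (huu : ∀ t, 0 < t → u' t = u t + q t - p t + (Ioc T (T + β)).indicator (fun _ => D) t) :
    ∀ t, 0 ≤ t → x' t ≤ x t + ∫ r in (0:ℝ)..t, q r := by
  set κ : ℝ → ℝ := (Ioc T (T + β)).indicator (fun _ => D) with hκ
  have hκi : Integrable κ := by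
    rw [hκ, integrable_indicator_iff measurableSet_Ioc]
    exact integrableOn_const (by simp)
  set d : ℝ → ℝ := fun t => p t - κ t with hd
  have hdi : Integrable d := hp.sub hκi
  have hD0 : 0 ≤ D := by
    rw [hD]; exact intervalIntegral.integral_nonneg hT (fun w _ => hp0 w)
  set A := T + β with hA
  have hA0 : 0 < A := by linarith
  set δ : ℝ → ℝ := fun t => ∫ r in (0:ℝ)..t, d r with hδ
  have hδc : Continuous δ :=
    intervalIntegral.continuous_primitive (fun a b => hdi.intervalIntegrable) 0
  have hδs : ∀ s t, δ t - δ s = ∫ r in s..t, d r := by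
    intro s t
    simp only [hδ]
    rw [intervalIntegral.integral_interval_sub_left hdi.intervalIntegrable hdi.intervalIntegrable]
  have hδ0 : δ 0 = 0 := by simp [hδ]
  have hdp : ∀ r, r ≤ T → d r = p r := by
    intro r hr
    simp [hd, hκ, hr]
  have hδmono : ∀ s t, s ≤ t → t ≤ T → δ s ≤ δ t := by
    intro s t hst ht
    have := hδs s t
    have h2 : 0 ≤ ∫ r in s..t, d r := by
      apply int_nonneg hst
      filter_upwards with r hr
      rw [hdp r (hr.2.trans ht)]; exact hp0 r
    linarith
  have hδT : δ T = D := by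
    rw [hD]
    apply intervalIntegral.integral_congr
    intro r hr
    rw [uIcc_of_le hT] at hr
    exact hdp r hr.2
  have hδ2 : ∀ t, T ≤ t → t ≤ A → δ t = D - D * (t - T) := by
    intro t h1 h2
    have h3 := hδs T t
    have h4 : ∫ r in T..t, d r = ∫ r in T..t, (-D) := by
      apply intervalIntegral.integral_congr_ae
      filter_upwards with r hr
      rw [uIoc_of_le h1] at hr
      have : r ∈ Ioc T A := ⟨hr.1, hr.2.trans h2⟩
      simp [hd, hκ, hpT r hr.1, indicator_of_mem this]
    rw [intervalIntegral.integral_const, smul_eq_mul] at h4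
    rw [hδT, h4] at h3
    linarith
  have hδD : ∀ t, t ≤ A → δ t ≤ D := by
    intro t ht
    rcases le_total t T with h | h
    · rw [← hδT]; exact hδmono t T h le_rfl
    · rw [hδ2 t h ht]
      have : 0 ≤ D * (t - T) := mul_nonneg hD0 (by linarith)
      linarith
  set I : ℝ → ℝ := fun t => ∫ s in (0:ℝ)..t, Real.exp (b₀ * s) * δ s with hI
  have hec : Continuous (fun s => Real.exp (b₀ * s) * δ s) := by fun_prop
  have hId : ∀ t, HasDerivAt I (Real.exp (b₀ * t) * δ t) t := fun t =>
    (hec.integral_hasStrictDerivAt 0 t).hasDerivAt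
  set ψ : ℝ → ℝ := fun t => Real.exp (-(b₀ * t)) * I t with hψ
  set φ : ℝ → ℝ := fun t => δ t - b₀ * ψ t with hφ
  have hψd : ∀ t, HasDerivAt ψ (φ t) t := by
    intro t
    have h1 : HasDerivAt (fun t => Real.exp (-(b₀ * t))) (Real.exp (-(b₀ * t)) * (-(b₀ * 1))) t :=
      (((hasDerivAt_id t).const_mul b₀).neg).exp
    have h2 := h1.mul (hId t)
    refine h2.congr_deriv ?_
    show _ = δ t - b₀ * (Real.exp (-(b₀ * t)) * I t)
    have : Real.exp (-(b₀ * t)) * Real.exp (b₀ * t) = 1 := by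
      rw [← Real.exp_add]; simp
    linear_combination (δ t) * this
  have hψc : Continuous ψ := continuous_iff_continuousAt.2 fun t => (hψd t).continuousAt
  have hφc : Continuous φ := hδc.sub (continuous_const.mul hψc)
  have hφs : ∀ s t, φ t - φ s = ∫ r in s..t, (d r - b₀ * φ r) := by
    intro s t
    have hi : IntervalIntegrable (fun r => b₀ * φ r) volume s t :=
      (continuous_const.mul hφc).intervalIntegrable _ _
    rw [intervalIntegral.integral_sub hdi.intervalIntegrable hi, ← hδs,
      intervalIntegral.integral_const_mul,
      intervalIntegral.integral_eq_sub_of_hasDerivAt (fun r _ => hψd r)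
        (hφc.intervalIntegrable _ _)]
    simp only [hφ]; ring
  have hbd : ∀ t B, 0 ≤ t → (∀ s ∈ Icc 0 t, δ s ≤ B) →
      δ t - B * (1 - Real.exp (-(b₀ * t))) ≤ φ t := by
    intro t B ht hB
    have h1 : I t ≤ ∫ s in (0:ℝ)..t, Real.exp (b₀ * s) * B := by
      apply intervalIntegral.integral_mono_on ht (hec.intervalIntegrable _ _)
      · exact Continuous.intervalIntegrable (by fun_prop) _ _
      · intro s hs
        exact mul_le_mul_of_nonneg_left (hB s hs) (Real.exp_pos _).le
    have h2 : ∫ s in (0:ℝ)..t, Real.exp (b₀ * s) * B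
        = Real.exp (b₀ * t) * (B / b₀) - Real.exp (b₀ * 0) * (B / b₀) := by
      apply intervalIntegral.integral_eq_sub_of_hasDerivAt
        (f := fun s => Real.exp (b₀ * s) * (B / b₀))
      · intro s _
        have h3 : HasDerivAt (fun s => Real.exp (b₀ * s)) (Real.exp (b₀ * s) * (b₀ * 1)) s :=
          ((hasDerivAt_id s).const_mul b₀).exp
        refine (h3.mul_const (B / b₀)).congr_deriv ?_
        field_simp
      · exact Continuous.intervalIntegrable (by fun_prop) _ _
    have h4 : b₀ * ψ t ≤ B * (1 - Real.exp (-(b₀ * t))) := by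
      have h5 : b₀ * ψ t ≤ b₀ * (Real.exp (-(b₀ * t)) *
          (Real.exp (b₀ * t) * (B / b₀) - Real.exp (b₀ * 0) * (B / b₀))) := by
        rw [← h2]
        exact mul_le_mul_of_nonneg_left (mul_le_mul_of_nonneg_left h1 (Real.exp_pos _).le) hb₀.le
      refine h5.trans (le_of_eq ?_)
      have : Real.exp (-(b₀ * t)) * Real.exp (b₀ * t) = 1 := by
        rw [← Real.exp_add]; simp
      rw [mul_zero, Real.exp_zero]
      have h6 : b₀ * (B / b₀) = B := by field_simp
      linear_combination (b₀ * (B / b₀)) * this + (1 - Real.exp (-(b₀ * t))) * h6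
    simp only [hφ]; linarith
  have hφ0 : ∀ t ∈ Icc 0 A, 0 ≤ φ t := by
    intro t ht
    rcases le_total t T with h | h
    · have h1 := hbd t (δ t) ht.1 (fun s hs => hδmono s t hs.2 h)
      have h2 : 0 ≤ δ t := by rw [← hδ0]; exact hδmono 0 t ht.1 h
      have := mul_nonneg h2 (Real.exp_pos (-(b₀ * t))).le
      linarith
    · have h1 := hbd t D ht.1 (fun s hs => hδD s (hs.2.trans ht.2))
      rw [hδ2 t h ht.2] at h1
      have h2 : β ≤ Real.exp (-(b₀ * t)) := by
        rw [hβe]; apply Real.exp_le_exp.2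
        have := mul_le_mul_of_nonneg_left ht.2 hb₀.le
        linarith
      have h3 : 0 ≤ D * (Real.exp (-(b₀ * t)) - (t - T)) :=
        mul_nonneg hD0 (by linarith [ht.2])
      linarith
  have hx00 : x 0 = x₀ := by rw [hx.2 0 le_rfl]; simp
  have hx00' : x' 0 = x₀ := by rw [hx'.2 0 le_rfl]; simp
  have huu' : ∀ t, 0 < t → u' t = u t + q t - d t := by
    intro t ht; rw [huu t ht]; simp only [hd]; ring
  have hA1 : ∀ t ∈ Icc 0 A, φ t ≤ x t - x' t + ∫ r in (0:ℝ)..t, q r :=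
    ycmp hF hFa hFl hx hx' (hu.2.1 A hA0) (hu'.2.1 A hA0) hq hq0 hdi huu' le_rfl
      hφc.continuousOn hφ0 (fun s t _ _ _ => (hφs s t).le)
      (by rw [hx00, hx00']; simp [hφ, hψ, hI, hδ0])
  intro t ht
  rcases le_total t A with h | h
  · have := hA1 t ⟨ht, h⟩
    have := hφ0 t ⟨ht, h⟩
    linarith
  · have hst : (0:ℝ) ≤ x A - x' A + ∫ r in (0:ℝ)..A, q r :=
      (hφ0 A ⟨hA0.le, le_rfl⟩).trans (hA1 A ⟨hA0.le, le_rfl⟩)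
    have := ycmp (φ := fun _ => 0) (b := t) (b₀ := b₀)
      hF hFa hFl hx hx' (hu.2.1 t (hA0.trans_le h)) (hu'.2.1 t (hA0.trans_le h)) hq hq0 hdi huu'
      hA0.le continuousOn_const (fun _ _ => le_rfl) (by
        intro r s hr hrs hs
        simp only [mul_zero, sub_zero, sub_self]
        apply int_nonneg hrs
        filter_upwards with w hw
        have hw1 : A < w := lt_of_le_of_lt hr hw.1
        have hw2 : w ∉ Ioc T A := fun hh => by linarith [hh.2]
        simp only [hd, hκ, hpT w (by linarith), indicator_of_notMem hw2]
        simp) hst t ⟨h, le_rfl⟩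
    linarith

lemma clamp_eq {v η N : ℝ} (h : η < N) :
    v + max (η - v) 0 - max (v - N) 0 = max (min v N) η := by
  rcases le_total v η with h1 | h1
  · rw [max_eq_left (by linarith), max_eq_right (by linarith : v - N ≤ 0), min_eq_left (by linarith),
      max_eq_right h1]; ring
  · rw [max_eq_right (by linarith)]
    rcases le_total v N with h2 | h2
    · rw [max_eq_right (by linarith), min_eq_left h2, max_eq_left h1]; ring
    · rw [max_eq_left (by linarith), min_eq_right h2, max_eq_left h.le]; ring

lemma clamp_log {v η N : ℝ} (hv : 0 < v) (hη : 0 < η) (h : η < N) :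
    max (η - v) 0 / η - max (v - N) 0 / N ≤ Real.log (max (min v N) η) - Real.log v := by
  have hN : 0 < N := hη.trans h
  rcases le_total v η with h1 | h1
  · rw [max_eq_left (by linarith), max_eq_right (by linarith : v - N ≤ 0), min_eq_left (by linarith),
      max_eq_right h1]
    have := Real.log_le_sub_one_of_pos (div_pos hv hη)
    rw [Real.log_div hv.ne' hη.ne'] at this
    have h3 : (η - v) / η = 1 - v / η := by field_simp
    rw [h3]; simp; linarith
  · rw [max_eq_right (by linarith : η - v ≤ 0)]
    rcases le_total v N with h2 | h2
    · rw [max_eq_right (by linarith), min_eq_left h2, max_eq_left h1]; simp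
    · rw [max_eq_left (by linarith), min_eq_right h2, max_eq_left h.le]
      have := Real.log_le_sub_one_of_pos (div_pos hv hN)
      rw [Real.log_div hv.ne' hN.ne'] at this
      have h3 : (v - N) / N = v / N - 1 := by field_simp
      rw [h3]; simp; linarith

lemma clamp_abs {v η N : ℝ} :
    |Real.log (max (min v N) η)| ≤ |Real.log v| + |Real.log η| + |Real.log N| := by
  have a := abs_nonneg (Real.log v)
  have b := abs_nonneg (Real.log η)
  have c := abs_nonneg (Real.log N)
  rcases max_choice (min v N) η with h | h
  · rw [h]
    rcases min_choice v N with h | h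
    · rw [h]; linarith
    · rw [h]; linarith
  · rw [h]; linarith

lemma add_log {v D z : ℝ} (hv : 0 < v) (hD : 0 ≤ D) (hz : 0 < z) :
    D * (2 / z - (v + D) / z ^ 2) ≤ Real.log (v + D) - Real.log v := by
  have hvD : 0 < v + D := by linarith
  have h1 := Real.log_le_sub_one_of_pos (div_pos hv hvD)
  rw [Real.log_div hv.ne' hvD.ne'] at h1
  have h2 : v / (v + D) - 1 = -(D * (1 / (v + D))) := by field_simp; ring
  have h3 : 2 / z - (v + D) / z ^ 2 ≤ 1 / (v + D) := by
    have : 1 / (v + D) - (2 / z - (v + D) / z ^ 2) = (v + D - z) ^ 2 / ((v + D) * z ^ 2) := by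
      field_simp; ring
    have h4 : 0 ≤ (v + D - z) ^ 2 / ((v + D) * z ^ 2) := by positivity
    linarith
  have h4 := mul_le_mul_of_nonneg_left h3 hD
  linarith

lemma add_log_abs {v D : ℝ} (hv : 0 < v) (hD : 0 ≤ D) :
    |Real.log (v + D)| ≤ |Real.log v| + v + D := by
  have h1 := Real.log_le_sub_one_of_pos (by linarith : 0 < v + D)
  have h2 := Real.log_le_log hv (by linarith : v ≤ v + D)
  rw [abs_le]
  have := neg_abs_le (Real.log v)
  have := abs_nonneg (Real.log v)
  constructor <;> linarith

lemma final_num {ρ c K₂ L T M η : ℝ} (hρ : 0 < ρ) (hc : 0 < c)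
    (hL : ρ + 2 * c / ρ < L)
    (hLineq : 2 * c * K₂ ≤ Real.exp (L - ρ) - (2 * c / ρ) * Real.exp (-L))
    (hT : 1 ≤ T) (hη : η = Real.exp (-L * T)) (hM0 : 0 ≤ M) (hM : M ≤ η * T) :
    c * (2 * M * K₂ + M ^ 2 / ρ) ≤ Real.exp (-ρ * T) / η * M := by
  have hcρ : 0 < c / ρ := div_pos hc hρ
  have e2 : 2 * c / ρ = 2 * (c / ρ) := by ring
  rw [e2] at hL hLineq
  have hL0 : 0 < L := by linarith
  have hr : Real.exp (-ρ * T) / η = Real.exp ((L - ρ) * T) := by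
    rw [hη, ← Real.exp_sub]; congr 1; ring
  have h1 : Real.exp (L - ρ) + 2 * (c / ρ) * (T - 1) ≤ Real.exp ((L - ρ) * T) := by
    have ha : (L - ρ) * T = (L - ρ) + (L - ρ) * (T - 1) := by ring
    rw [ha, Real.exp_add]
    have hb := Real.add_one_le_exp ((L - ρ) * (T - 1))
    have hd : 1 ≤ Real.exp (L - ρ) := Real.one_le_exp (by linarith)
    have he : 2 * (c / ρ) * (T - 1) ≤ (L - ρ) * (T - 1) :=
      mul_le_mul_of_nonneg_right (by linarith) (by linarith)
    have hf : 0 ≤ 2 * (c / ρ) * (T - 1) := by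
      have : 0 ≤ T - 1 := by linarith
      positivity
    nlinarith
  have h2 : η * T ≤ Real.exp (-L) + (T - 1) := by
    have ha : η ≤ Real.exp (-L) := by
      rw [hη]; apply Real.exp_le_exp.2; nlinarith
    have hb : η ≤ 1 := by rw [hη]; apply Real.exp_le_one_iff.2; nlinarith
    nlinarith
  have h3 : 2 * c * K₂ + (c / ρ) * M ≤ Real.exp ((L - ρ) * T) := by
    have ha : (c / ρ) * M ≤ (c / ρ) * (Real.exp (-L) + (T - 1)) :=
      mul_le_mul_of_nonneg_left (hM.trans h2) hcρ.le
    have hb := mul_pos hcρ (Real.exp_pos (-L))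
    have hd : 0 ≤ (c / ρ) * (T - 1) := mul_nonneg hcρ.le (by linarith)
    nlinarith
  rw [hr]
  have h4 := mul_le_mul_of_nonneg_right h3 hM0
  have h5 : c * (2 * M * K₂ + M ^ 2 / ρ) = (2 * c * K₂ + (c / ρ) * M) * M := by
    field_simp
  linarith

lemma exp_int {ρ : ℝ} (hρ : 0 < ρ) :
    IntegrableOn (fun t => Real.exp (-ρ * t)) (Ioi (0:ℝ)) ∧
      ∫ t in Ioi (0:ℝ), Real.exp (-ρ * t) = 1 / ρ := by
  refine ⟨integrableOn_exp_mul_Ioi (by linarith) 0, ?_⟩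
  rw [integral_exp_mul_Ioi (by linarith) 0]
  simp

lemma eta_lt {ρ c b₀ K₁ L T β : ℝ} (hρ : 0 < ρ) (hc : 0 < c) (hb₀ : 0 < b₀) (hK₁ : 1 ≤ K₁)
    (hL : ρ + 2 * c / ρ < L) (hT : 1 ≤ T) (hβ : 0 < β)
    (hβe : β = Real.exp (-(b₀ * (T + β)))) :
    β < 1 ∧ Real.exp (-L * T) < K₁ * β⁻¹ ^ 2 * Real.exp (2 * ρ * (T + β)) := by
  have hβ1 : β < 1 := by
    have h0 : 0 < b₀ * (T + β) := by positivity
    have h1 := Real.exp_lt_exp.2 (by linarith : -(b₀ * (T + β)) < 0)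
    rwa [Real.exp_zero, ← hβe] at h1
  refine ⟨hβ1, ?_⟩
  have hL0 : 0 < L := by
    have : 0 < 2 * c / ρ := by positivity
    linarith
  have h1 : Real.exp (-L * T) < 1 := by
    have h1 := Real.exp_lt_exp.2 (by nlinarith : -L * T < 0)
    rwa [Real.exp_zero] at h1
  have h2 : 1 ≤ β⁻¹ ^ 2 := one_le_pow₀ ((one_le_inv₀ hβ).2 hβ1.le)
  have h3 : 1 ≤ Real.exp (2 * ρ * (T + β)) := Real.one_le_exp (by positivity)
  have h4 : 1 ≤ K₁ * β⁻¹ ^ 2 := one_le_mul_of_one_le_of_one_le hK₁ h2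
  exact h1.trans_le (one_le_mul_of_one_le_of_one_le h4 h3)

set_option maxHeartbeats 1600000 in
lemma log_gain {ρ K₁ T β η N D : ℝ} {u u' p q : ℝ → ℝ} (hρ : 0 < ρ) (hK₁ : 1 ≤ K₁) (hT : 1 ≤ T)
    (hβ : 0 < β) (hβ1 : β < 1) (hη : 0 < η) (hηN : η < N)
    (hN : N = K₁ * β⁻¹ ^ 2 * Real.exp (2 * ρ * (T + β)))
    (hu : Admissible u)
    (hq : q = (Icc 0 T).indicator (fun t => max (η - u t) 0))
    (hp : p = (Icc 0 T).indicator (fun t => max (u t - N) 0))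
    (hqi : Integrable q) (hpi : Integrable p)
    (hD : D = ∫ r in Ioi (0:ℝ), p r)
    (hu' : u' = fun t => u t + q t - p t + (Ioc T (T + β)).indicator (fun _ => D) t)
    (hum' : Measurable u')
    (hwu : IntegrableOn (fun t => Real.exp (-ρ * t) * u t) (Ioi (0:ℝ)))
    (hwK : (∫ t in Ioi (0:ℝ), Real.exp (-ρ * t) * u t) ≤ K₁)
    (hwl : IntegrableOn (fun t => Real.exp (-ρ * t) * Real.log (u t)) (Ioi (0:ℝ))) :
    IntegrableOn (fun t => Real.exp (-ρ * t) * Real.log (u' t)) (Ioi (0:ℝ)) ∧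
    Real.exp (-ρ * T) / η * (∫ r in Ioi (0:ℝ), q r) ≤
      (∫ t in Ioi (0:ℝ), Real.exp (-ρ * t) * Real.log (u' t))
      - ∫ t in Ioi (0:ℝ), Real.exp (-ρ * t) * Real.log (u t) := by
  have hN0 : 0 < N := hη.trans hηN
  have hpos : ∀ᵐ t ∂(volume.restrict (Ioi (0:ℝ))), 0 < u t :=
    ae_restrict_of_ae_restrict_of_subset Ioi_subset_Ici_self hu.2.2
  have hp0 : ∀ t, 0 ≤ p t := by
    intro t; rw [hp]; exact indicator_nonneg (fun _ _ => le_max_right _ _) t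
  have hq0 : ∀ t, 0 ≤ q t := by
    intro t; rw [hq]; exact indicator_nonneg (fun _ _ => le_max_right _ _) t
  have hD0 : 0 ≤ D := by rw [hD]; exact setIntegral_nonneg measurableSet_Ioi (fun t _ => hp0 t)
  set A := T + β with hA
  have hA0 : 0 < A := by linarith
  have v1 : ∀ t, 0 < t → t ≤ T → u' t = max (min (u t) N) η := by
    intro t h0 h1
    have m1 : t ∈ Icc 0 T := ⟨h0.le, h1⟩
    have m2 : t ∉ Ioc T A := fun h => by linarith [h.1]
    rw [hu', hq, hp]
    simp only [indicator_of_mem m1, indicator_of_notMem m2]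
    rw [add_zero, clamp_eq hηN]
  have v2 : ∀ t, T < t → q t = 0 ∧ p t = 0 := by
    intro t h0
    have m1 : t ∉ Icc 0 T := fun h => by linarith [h.2]
    rw [hq, hp]
    simp [indicator_of_notMem m1]
  have v3 : ∀ t, T < t → t ≤ A → u' t = u t + D := by
    intro t h0 h1
    rw [hu']
    have m2 : t ∈ Ioc T A := ⟨h0, h1⟩
    simp only [indicator_of_mem m2, v2 t h0]; ring
  have v4 : ∀ t, A < t → u' t = u t := by
    intro t h0
    rw [hu']
    have m2 : t ∉ Ioc T A := fun h => by linarith [h.2]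
    simp only [indicator_of_notMem m2, v2 t (by linarith)]; ring
  obtain ⟨hwi, -⟩ := exp_int hρ
  have hlogI : IntegrableOn (fun t => Real.exp (-ρ * t) * Real.log (u' t)) (Ioi (0:ℝ)) := by
    have hdom : IntegrableOn (fun t => |Real.exp (-ρ * t) * Real.log (u t)|
        + Real.exp (-ρ * t) * u t + Real.exp (-ρ * t) * (|Real.log η| + |Real.log N| + D))
        (Ioi (0:ℝ)) := (hwl.abs.add hwu).add (hwi.mul_const _)
    refine Integrable.mono' hdom ?_ ?_
    · exact Measurable.aestronglyMeasurable (by fun_prop)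
    · filter_upwards [hpos, ae_restrict_mem measurableSet_Ioi] with t ht h0
      have hw := Real.exp_pos (-ρ * t)
      rw [Real.norm_eq_abs, abs_mul, abs_mul, abs_of_pos hw, ← mul_add, ← mul_add]
      apply mul_le_mul_of_nonneg_left _ hw.le
      have a := abs_nonneg (Real.log (u t))
      have b := abs_nonneg (Real.log η)
      have c := abs_nonneg (Real.log N)
      rcases le_or_gt t T with h | h
      · rw [v1 t h0 h]
        have := clamp_abs (v := u t) (η := η) (N := N)
        linarith
      · rcases le_or_gt t A with h' | h'
        · rw [v3 t h h']
          have := add_log_abs ht hD0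
          linarith
        · rw [v4 t h']; linarith
  refine ⟨hlogI, ?_⟩
  set E := Real.exp (-ρ * A) with hE
  set Q := Real.exp (ρ * A) * K₁ with hQ
  have hQ0 : 0 < Q := by positivity
  have hE0 : 0 < E := Real.exp_pos _
  set z := Q / β with hz
  have hz0 : 0 < z := by positivity
  have huA : IntegrableOn u (Icc 0 A) := hu.2.1 A hA0
  have huS : IntegrableOn u (Ioc T A) :=
    huA.mono_set (fun t ht => ⟨by linarith [ht.1], ht.2⟩)
  have hsubA : Ioc T A ⊆ Ioi (0:ℝ) := fun t ht => by
    have := ht.1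
    show 0 < t
    linarith
  set k : ℝ → ℝ := (Ioc T A).indicator (fun t => E * (D * (2 / z - (u t + D) / z ^ 2))) with hk
  have hcst : ∀ r : ℝ, Integrable (fun _ : ℝ => r) (volume.restrict (Ioc T A)) :=
    fun r => integrable_const r
  have hki0 : IntegrableOn (fun t => E * (D * (2 / z - (u t + D) / z ^ 2))) (Ioc T A) := by
    apply Integrable.const_mul
    apply Integrable.const_mul
    apply Integrable.sub (hcst _)
    apply Integrable.div_const
    exact huS.add (hcst _)
  have hki : Integrable k := by
    rw [hk, integrable_indicator_iff measurableSet_Ioc]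
    exact hki0
  have hk1 : ∫ t in Ioi (0:ℝ), k t
      = E * (D * (2 / z * β - ((∫ t in Ioc T A, u t) + D * β) / z ^ 2)) := by
    have hvol : volume.real (Ioc T A) = β := by
      rw [Real.volume_real_Ioc_of_le (by linarith)]; simp [hA]
    have hdiv : ∫ t in Ioc T A, (u t + D) / z ^ 2 = ((∫ t in Ioc T A, u t) + D * β) / z ^ 2 := by
      rw [integral_div, integral_add huS (hcst D), setIntegral_const, hvol, smul_eq_mul,
        mul_comm β D]
    have hs : IntegrableOn (fun t => (u t + D) / z ^ 2) (Ioc T A) :=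
      (huS.add (hcst D)).div_const _
    rw [hk, setIntegral_indicator measurableSet_Ioc, inter_eq_self_of_subset_right hsubA,
      integral_const_mul, integral_const_mul, integral_sub (hcst _) hs, hdiv,
      setIntegral_const, hvol, smul_eq_mul]
    ring
  -- total mass bound
  have hmass : (∫ t in Ioc T A, u t) + D * β ≤ Q := by
    have hDT : D ≤ ∫ t in Ioc 0 T, u t := by
      have : D = ∫ t in Ioc 0 T, p t := by
        rw [hD]
        apply setIntegral_eq_of_subset_of_forall_sdiff_eq_zero measurableSet_Ioi
          (fun t ht => ht.1)
        intro t ht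
        refine (v2 t ?_).2
        by_contra hcon
        exact ht.2 ⟨ht.1, not_lt.1 hcon⟩
      rw [this]
      apply setIntegral_mono_on_ae hpi.integrableOn
        (huA.mono_set (fun t ht => ⟨ht.1.le, by linarith [ht.2]⟩)) measurableSet_Ioc
      have h1 := (ae_restrict_iff' measurableSet_Ioi).1 hpos
      filter_upwards [h1] with t ht htm
      have hut := ht htm.1
      have m1 : t ∈ Icc 0 T := ⟨htm.1.le, htm.2⟩
      rw [hp, indicator_of_mem m1]
      exact max_le (by linarith) hut.le
    have hDβ : D * β ≤ D := by nlinarith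
    have hsum : (∫ t in Ioc 0 T, u t) + (∫ t in Ioc T A, u t) = ∫ t in Ioc 0 A, u t := by
      rw [← setIntegral_union (Ioc_disjoint_Ioc_of_le le_rfl) measurableSet_Ioc
        (huA.mono_set (fun t ht => ⟨ht.1.le, by linarith [ht.2]⟩)) huS,
        Ioc_union_Ioc_eq_Ioc (by linarith) (by linarith)]
    have hA1 : ∫ t in Ioc 0 A, u t ≤ ∫ t in Ioc 0 A, Real.exp (ρ * A) * (Real.exp (-ρ * t) * u t) := by
      apply setIntegral_mono_on_ae (huA.mono_set Ioc_subset_Icc_self)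
        ((hwu.mono_set (fun t ht => ht.1)).const_mul _) measurableSet_Ioc
      have h1 := (ae_restrict_iff' measurableSet_Ioi).1 hpos
      filter_upwards [h1] with t ht htm
      have hut := ht htm.1
      rw [← mul_assoc, ← Real.exp_add]
      have : 1 ≤ Real.exp (ρ * A + -ρ * t) := Real.one_le_exp (by nlinarith [htm.2])
      nlinarith
    have hA2 : ∫ t in Ioc 0 A, Real.exp (-ρ * t) * u t ≤ ∫ t in Ioi (0:ℝ), Real.exp (-ρ * t) * u t := by
      apply setIntegral_mono_set hwu
      · filter_upwards [hpos] with t ht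
        exact mul_nonneg (Real.exp_pos _).le ht.le
      · exact Eventually.of_forall (fun t ht => ht.1)
    rw [integral_const_mul] at hA1
    have hA3 := mul_le_mul_of_nonneg_left (hA2.trans hwK) (Real.exp_pos (ρ * A)).le
    linarith
  have hkD : D / N ≤ ∫ t in Ioi (0:ℝ), k t := by
    rw [hk1]
    have h1 : E * (D * (2 / z * β - Q / z ^ 2))
        ≤ E * (D * (2 / z * β - ((∫ t in Ioc T A, u t) + D * β) / z ^ 2)) := by
      gcongr
    refine le_trans (le_of_eq ?_) h1
    have hEE : E * Real.exp (ρ * A) = 1 := by rw [hE, ← Real.exp_add]; simp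
    have hNe : N = K₁ * β⁻¹ ^ 2 * (Real.exp (ρ * A) * Real.exp (ρ * A)) := by
      rw [hN, ← Real.exp_add]; congr 2; ring
    have hEi : E = (Real.exp (ρ * A))⁻¹ := eq_inv_of_mul_eq_one_left hEE
    rw [hNe, hEi, hz, hQ]
    have := Real.exp_pos (ρ * A)
    field_simp
    ring
  have hgi : IntegrableOn (fun t => Real.exp (-ρ * T) / η * q t - p t / N + k t) (Ioi (0:ℝ)) :=
    ((hqi.integrableOn.const_mul _).sub (hpi.integrableOn.div_const _)).add hki.integrableOn
  have hg : ∫ t in Ioi (0:ℝ), (Real.exp (-ρ * T) / η * q t - p t / N + k t)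
      = Real.exp (-ρ * T) / η * (∫ r in Ioi (0:ℝ), q r) - D / N + ∫ t in Ioi (0:ℝ), k t := by
    rw [integral_add, integral_sub, integral_const_mul, integral_div, hD]
    · exact hqi.integrableOn.const_mul _
    · exact hpi.integrableOn.div_const _
    · exact (hqi.integrableOn.const_mul _).sub (hpi.integrableOn.div_const _)
    · exact hki.integrableOn
  have hle : ∫ t in Ioi (0:ℝ), (Real.exp (-ρ * T) / η * q t - p t / N + k t)
      ≤ ∫ t in Ioi (0:ℝ), (Real.exp (-ρ * t) * Real.log (u' t) - Real.exp (-ρ * t) * Real.log (u t)) := by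
    apply integral_mono_ae hgi (hlogI.sub hwl)
    filter_upwards [hpos, ae_restrict_mem measurableSet_Ioi] with t ht h0
    have hw := Real.exp_pos (-ρ * t)
    have h0' : 0 < t := h0
    show _ ≤ Real.exp (-ρ * t) * Real.log (u' t) - Real.exp (-ρ * t) * Real.log (u t)
    rw [← mul_sub]
    rcases le_or_gt t T with h | h
    · rw [v1 t h0 h]
      have m1 : t ∈ Icc 0 T := ⟨h0'.le, h⟩
      have m2 : t ∉ Ioc T A := fun h => by linarith [h.1]
      have h1 := mul_le_mul_of_nonneg_left (clamp_log ht hη hηN) hw.le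
      have hqt : q t = max (η - u t) 0 := by rw [hq, indicator_of_mem m1]
      have hpt : p t = max (u t - N) 0 := by rw [hp, indicator_of_mem m1]
      rw [← hqt, ← hpt] at h1
      have hkt : k t = 0 := by rw [hk, indicator_of_notMem m2]
      rw [hkt]
      refine le_trans ?_ h1
      have h2 : Real.exp (-ρ * T) ≤ Real.exp (-ρ * t) := Real.exp_le_exp.2 (by nlinarith)
      have h3 : Real.exp (-ρ * t) ≤ 1 := Real.exp_le_one_iff.2 (by nlinarith)
      have h4 : Real.exp (-ρ * T) * (q t / η) ≤ Real.exp (-ρ * t) * (q t / η) :=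
        mul_le_mul_of_nonneg_right h2 (div_nonneg (hq0 t) hη.le)
      have h5 : Real.exp (-ρ * t) * (p t / N) ≤ 1 * (p t / N) :=
        mul_le_mul_of_nonneg_right h3 (div_nonneg (hp0 t) hN0.le)
      have h6 : Real.exp (-ρ * T) / η * q t = Real.exp (-ρ * T) * (q t / η) := by ring
      rw [h6, mul_sub]
      linarith
    · rw [(v2 t h).1, (v2 t h).2]
      rcases le_or_gt t A with h' | h'
      · rw [v3 t h h']
        have m2 : t ∈ Ioc T A := ⟨h, h'⟩
        rw [hk, indicator_of_mem m2]
        have h1 := mul_le_mul_of_nonneg_left (add_log ht hD0 hz0) hE0.le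
        have h2 : E ≤ Real.exp (-ρ * t) := Real.exp_le_exp.2 (by nlinarith)
        have h3 : 0 ≤ Real.log (u t + D) - Real.log (u t) :=
          sub_nonneg.2 (Real.log_le_log ht (by linarith))
        have h4 := mul_le_mul_of_nonneg_right h2 h3
        have h5 : Real.exp (-ρ * T) / η * 0 - 0 / N = 0 := by simp
        rw [h5, zero_add]
        exact h1.trans h4
      · rw [v4 t h']
        have m2 : t ∉ Ioc T A := fun h => by linarith [h.2]
        rw [hk, indicator_of_notMem m2]
        simp
  rw [integral_sub hlogI hwl, hg] at hle
  linarith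

set_option maxHeartbeats 1600000 in
lemma main_aux
    (ρ c x₀ b₀ K₁ K₂ L : ℝ) (F : ℝ → ℝ)
    (hρ : 0 < ρ) (hc : 0 < c) (hx₀ : 0 ≤ x₀) (hb₀ : 0 < b₀)
    (hF : ContDiff ℝ 1 F) (hF0 : F 0 = 0)
    (hF' : ∀ y : ℝ, -b₀ ≤ deriv F y ∧ deriv F y ≤ 0)
    (hK₁ : 1 ≤ K₁)
    (hL : ρ + 2 * c / ρ < L)
    (hLineq : 2 * c * K₂ ≤ Real.exp (L - ρ) - (2 * c / ρ) * Real.exp (-L))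
    (T : ℝ) (hT : 1 ≤ T) (β : ℝ) (hβ : 0 < β) (hβ1 : β < 1)
    (hβe : β = Real.exp (-(b₀ * (T + β))))
    (η N : ℝ) (hη : η = Real.exp (-L * T))
    (hN : N = K₁ * β⁻¹ ^ 2 * Real.exp (2 * ρ * (T + β))) (hηN : η < N)
    (u x : ℝ → ℝ) (hu : Admissible u) (hx : Trajectory F x₀ u x)
    (hwu : IntegrableOn (fun t => Real.exp (-ρ * t) * u t) (Set.Ioi (0:ℝ)))
    (hwK : (∫ t in Set.Ioi (0:ℝ), Real.exp (-ρ * t) * u t) ≤ K₁)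
    (hwx : IntegrableOn (fun t => Real.exp (-ρ * t) * x t) (Set.Ioi (0:ℝ)))
    (hwK2 : (∫ t in Set.Ioi (0:ℝ), Real.exp (-ρ * t) * x t) ≤ K₂)
    (hobj : ObjIntegrable ρ c u x) :
    ∃ u' x' : ℝ → ℝ,
      Admissible u' ∧ Trajectory F x₀ u' x' ∧
      (∀ᵐ t ∂(volume.restrict (Set.Icc (0:ℝ) T)), u' t = max (min (u t) N) η) ∧
      ObjIntegrable ρ c u' x' ∧
      objective ρ c u x ≤ objective ρ c u' x' := by
  have hη0 : 0 < η := by rw [hη]; exact Real.exp_pos _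
  have hT0 : 0 < T := by linarith
  -- properties of F
  have hFd : Differentiable ℝ F := hF.differentiable (by norm_num)
  have hFa : Antitone F := antitone_of_deriv_nonpos hFd (fun y => (hF' y).2)
  have hFL : LipschitzWith (Real.toNNReal b₀) F := by
    apply lipschitzWith_of_nnnorm_deriv_le hFd
    intro y
    rw [← NNReal.coe_le_coe, Real.coe_toNNReal _ hb₀.le, coe_nnnorm, Real.norm_eq_abs, abs_le]
    exact ⟨(hF' y).1, (hF' y).2.trans hb₀.le⟩
  have hFc := hFL.continuous
  have hFl : ∀ y z, z ≤ y → F z - F y ≤ b₀ * (y - z) := by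
    intro y z hzy
    have h1 := hFL.dist_le_mul z y
    rw [Real.coe_toNNReal _ hb₀.le, Real.dist_eq, Real.dist_eq, abs_sub_comm z y,
      abs_of_nonneg (sub_nonneg.2 hzy)] at h1
    exact (le_abs_self _).trans h1
  have huT : IntegrableOn u (Icc 0 T) := hu.2.1 T hT0
  have hum := hu.1
  set q : ℝ → ℝ := (Icc 0 T).indicator (fun t => max (η - u t) 0) with hq
  set p : ℝ → ℝ := (Icc 0 T).indicator (fun t => max (u t - N) 0) with hp
  have hcst : ∀ r : ℝ, Integrable (fun _ : ℝ => r) (volume.restrict (Icc 0 T)) :=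
    fun r => integrable_const r
  have hqi : Integrable q := by
    rw [hq, integrable_indicator_iff measurableSet_Icc]
    exact ((hcst η).sub huT).pos_part
  have hpi : Integrable p := by
    rw [hp, integrable_indicator_iff measurableSet_Icc]
    exact (huT.sub (hcst N)).pos_part
  have hqm : Measurable q := Measurable.indicator (by fun_prop) measurableSet_Icc
  have hpm : Measurable p := Measurable.indicator (by fun_prop) measurableSet_Icc
  have hp0 : ∀ t, 0 ≤ p t := by
    intro t; rw [hp]; exact indicator_nonneg (fun _ _ => le_max_right _ _) t
  have hq0 : ∀ t, 0 ≤ q t := by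
    intro t; rw [hq]; exact indicator_nonneg (fun _ _ => le_max_right _ _) t
  have v2 : ∀ t, T < t → q t = 0 ∧ p t = 0 := by
    intro t h0
    have m1 : t ∉ Icc 0 T := fun h => by linarith [h.2]
    rw [hq, hp]
    simp [indicator_of_notMem m1]
  set D : ℝ := ∫ r in Ioi (0:ℝ), p r with hD
  set M : ℝ := ∫ r in Ioi (0:ℝ), q r with hM
  have hD0 : 0 ≤ D := setIntegral_nonneg measurableSet_Ioi (fun t _ => hp0 t)
  have hM0 : 0 ≤ M := setIntegral_nonneg measurableSet_Ioi (fun t _ => hq0 t)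
  have hDi : D = ∫ r in (0:ℝ)..T, p r := by
    rw [hD, intervalIntegral.integral_of_le hT0.le]
    apply setIntegral_eq_of_subset_of_forall_sdiff_eq_zero measurableSet_Ioi (fun t ht => ht.1)
    intro t ht
    refine (v2 t ?_).2
    by_contra hcon
    exact ht.2 ⟨ht.1, not_lt.1 hcon⟩
  have hupos : ∀ᵐ t ∂(volume.restrict (Ioi (0:ℝ))), 0 < u t :=
    ae_restrict_of_ae_restrict_of_subset Ioi_subset_Ici_self hu.2.2
  have hMi : M ≤ η * T := by
    have h1 : M = ∫ r in Ioc 0 T, q r := by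
      apply setIntegral_eq_of_subset_of_forall_sdiff_eq_zero measurableSet_Ioi (fun t ht => ht.1)
      intro t ht
      refine (v2 t ?_).1
      by_contra hcon
      exact ht.2 ⟨ht.1, not_lt.1 hcon⟩
    have h2 : ∫ r in Ioc 0 T, q r ≤ ∫ r in Ioc 0 T, η := by
      apply setIntegral_mono_on_ae hqi.integrableOn (integrable_const η) measurableSet_Ioc
      have h1 := (ae_restrict_iff' measurableSet_Ioi).1 hupos
      filter_upwards [h1] with t ht htm
      have hut := ht htm.1
      have m1 : t ∈ Icc 0 T := ⟨htm.1.le, htm.2⟩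
      rw [hq, indicator_of_mem m1]
      exact max_le (by linarith) hη0.le
    rw [setIntegral_const, Real.volume_real_Ioc_of_le hT0.le, smul_eq_mul] at h2
    rw [h1]; linarith
  have hqt : ∀ t, 0 ≤ t → ∫ r in (0:ℝ)..t, q r ≤ M := by
    intro t ht
    rw [intervalIntegral.integral_of_le ht]
    apply setIntegral_mono_set hqi.integrableOn
    · exact Eventually.of_forall hq0
    · exact Eventually.of_forall (fun t ht => ht.1)
  set κ : ℝ → ℝ := (Ioc T (T + β)).indicator (fun _ => D) with hκ
  have hκ0 : ∀ t, 0 ≤ κ t := by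
    intro t; rw [hκ]; exact indicator_nonneg (fun _ _ => hD0) t
  have hκi : Integrable κ := by
    rw [hκ, integrable_indicator_iff measurableSet_Ioc]
    exact integrableOn_const (by simp)
  have hκm : Measurable κ := Measurable.indicator measurable_const measurableSet_Ioc
  set u' : ℝ → ℝ := fun t => u t + q t - p t + κ t with hu'
  have v1 : ∀ t ∈ Icc 0 T, u' t = max (min (u t) N) η := by
    intro t m1
    have m2 : t ∉ Ioc T (T + β) := fun h => by linarith [h.1, m1.2]
    simp only [hu', hq, hp, hκ, indicator_of_mem m1, indicator_of_notMem m2]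
    rw [add_zero, clamp_eq hηN]
  have hum' : Measurable u' := ((hum.add hqm).sub hpm).add hκm
  have hadm : Admissible u' := by
    refine ⟨hum', fun S hS => ?_, ?_⟩
    · exact (((hu.2.1 S hS).add hqi.integrableOn).sub hpi.integrableOn).add hκi.integrableOn
    · filter_upwards [hu.2.2, ae_restrict_mem measurableSet_Ici] with t ht h0
      rcases le_or_gt t T with h | h
      · rw [v1 t ⟨h0, h⟩]; exact lt_max_of_lt_right hη0
      · simp only [hu', v2 t h]
        linarith [hκ0 t]
  obtain ⟨x', hx'⟩ := exists_traj hFa hF0 hb₀.le hFL hx₀ hadm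
  have hnn : ∀ {v y : ℝ → ℝ}, Admissible v → Trajectory F x₀ v y → ∀ t, 0 < t → 0 ≤ y t := by
    intro v y hv hy t ht
    refine (traj_on hy t).nonneg hFc hFa hF0 hx₀ (hv.2.1 t ht) ?_ t ⟨ht.le, le_rfl⟩
    have := ae_restrict_of_ae_restrict_of_subset (fun r hr => hr.1 : Icc (0:ℝ) t ⊆ Ici 0) hv.2.2
    filter_upwards [this] with r hr using hr.le
  have hxp := hnn hu hx
  have hxp' := hnn hadm hx'
  have hcmp : ∀ t, 0 < t → x' t ≤ x t + M := by
    intro t ht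
    have := key_cmp hFc hFa hFl hb₀ hT0.le hβ hβe hx hx' hu hadm hqi hq0 hpi hp0
      (fun t ht => (v2 t ht).2) hDi (fun t _ => rfl) t ht.le
    linarith [hqt t ht.le]
  -- integrability
  obtain ⟨hwi, hwv⟩ := exp_int hρ
  have hxm : AEStronglyMeasurable x (volume.restrict (Ioi (0:ℝ))) :=
    (hx.1.mono Ioi_subset_Ici_self).aestronglyMeasurable measurableSet_Ioi
  have hxm' : AEStronglyMeasurable x' (volume.restrict (Ioi (0:ℝ))) :=
    (hx'.1.mono Ioi_subset_Ici_self).aestronglyMeasurable measurableSet_Ioi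
  have hwm : AEStronglyMeasurable (fun t => Real.exp (-ρ * t)) (volume.restrict (Ioi (0:ℝ))) :=
    hwi.aestronglyMeasurable
  have hobj' := hobj
  unfold ObjIntegrable at hobj'
  have hx2 : IntegrableOn (fun t => Real.exp (-ρ * t) * x t ^ 2) (Ioi (0:ℝ)) := by
    refine Integrable.mono' ((hwu.sub hobj').div_const c) (hwm.mul (hxm.pow 2)) ?_
    filter_upwards [hupos] with t ht
    have hw := Real.exp_pos (-ρ * t)
    rw [Real.norm_eq_abs, abs_of_nonneg (by positivity)]
    rw [le_div_iff₀ hc]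
    simp only [Pi.sub_apply]
    have h1 := Real.log_le_sub_one_of_pos ht
    have h2 : Real.exp (-ρ * t) * Real.log (u t) ≤ Real.exp (-ρ * t) * u t :=
      mul_le_mul_of_nonneg_left (by linarith) hw.le
    linarith
  have hwl : IntegrableOn (fun t => Real.exp (-ρ * t) * Real.log (u t)) (Ioi (0:ℝ)) := by
    refine (hobj'.add (hx2.const_mul c)).congr ?_
    filter_upwards with t
    simp only [Pi.add_apply]; ring
  have hx2' : IntegrableOn (fun t => Real.exp (-ρ * t) * x' t ^ 2) (Ioi (0:ℝ)) := by
    refine Integrable.mono' ((hx2.const_mul 2).add (hwi.mul_const (2 * M ^ 2)))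
      (hwm.mul (hxm'.pow 2)) ?_
    filter_upwards [ae_restrict_mem measurableSet_Ioi] with t ht
    have hw := Real.exp_pos (-ρ * t)
    rw [Real.norm_eq_abs, abs_of_nonneg (by positivity)]
    simp only [Pi.add_apply]
    have h1 : x' t ^ 2 ≤ (x t + M) ^ 2 := pow_le_pow_left₀ (hxp' t ht) (hcmp t ht) 2
    have h2 : x' t ^ 2 ≤ 2 * x t ^ 2 + 2 * M ^ 2 := by nlinarith [sq_nonneg (x t - M)]
    have := mul_le_mul_of_nonneg_left h2 hw.le
    linarith
  obtain ⟨hwl', hgain⟩ := log_gain hρ hK₁ hT hβ hβ1 hη0 hηN hN hu hq hp hqi hpi hD hu' hum'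
    hwu hwK hwl
  have hsplit : ∀ v y : ℝ → ℝ, (fun t => Real.exp (-ρ * t) * (Real.log (v t) - c * y t ^ 2))
      = fun t => Real.exp (-ρ * t) * Real.log (v t) - c * (Real.exp (-ρ * t) * y t ^ 2) := by
    intro v y; funext t; ring
  refine ⟨u', x', hadm, hx', ?_, ?_, ?_⟩
  · filter_upwards [ae_restrict_mem measurableSet_Icc] with t ht using v1 t ht
  · unfold ObjIntegrable
    rw [hsplit]
    exact hwl'.sub (hx2'.const_mul c)
  · unfold objective
    rw [hsplit, hsplit, integral_sub hwl (hx2.const_mul c), integral_sub hwl' (hx2'.const_mul c),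
      integral_const_mul, integral_const_mul]
    have hfin := final_num (K₂ := K₂) hρ hc hL hLineq hT hη hM0 hMi
    have hloss : ∫ t in Ioi (0:ℝ), Real.exp (-ρ * t) * x' t ^ 2
        ≤ ∫ t in Ioi (0:ℝ), (Real.exp (-ρ * t) * x t ^ 2 + (2 * M) * (Real.exp (-ρ * t) * x t)
          + Real.exp (-ρ * t) * M ^ 2) := by
      apply setIntegral_mono_on hx2' ((hx2.add (hwx.const_mul _)).add (hwi.mul_const _))
        measurableSet_Ioi
      intro t ht
      have hw := Real.exp_pos (-ρ * t)
      have h1 : x' t ^ 2 ≤ (x t + M) ^ 2 := pow_le_pow_left₀ (hxp' t ht) (hcmp t ht) 2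
      have := mul_le_mul_of_nonneg_left h1 hw.le
      refine this.trans (le_of_eq ?_)
      simp only [Pi.add_apply]
      ring
    have hs : IntegrableOn (fun t => Real.exp (-ρ * t) * x t ^ 2
        + (2 * M) * (Real.exp (-ρ * t) * x t)) (Ioi (0:ℝ)) := hx2.add (hwx.const_mul _)
    rw [integral_add hs (hwi.mul_const _),
      integral_add hx2 (hwx.const_mul _), integral_const_mul, integral_mul_const, hwv] at hloss
    have h3 : 2 * M * ∫ t in Ioi (0:ℝ), Real.exp (-ρ * t) * x t ≤ 2 * M * K₂ :=
      mul_le_mul_of_nonneg_left hwK2 (by linarith)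
    have h4 : ∫ t in Ioi (0:ℝ), Real.exp (-ρ * t) * x' t ^ 2
        ≤ (∫ t in Ioi (0:ℝ), Real.exp (-ρ * t) * x t ^ 2) + (2 * M * K₂ + M ^ 2 / ρ) := by
      have : 1 / ρ * M ^ 2 = M ^ 2 / ρ := by ring
      linarith
    have h5 := mul_le_mul_of_nonneg_left h4 hc.le
    linarith

end ULB

/-- Uniform localization from below: a control in a maximizing sequence can be
truncated above by `N(T)` and below by `η(T) = e^{-LT}` on `[0,T]` without
decreasing the objective value. -/
theorem uniform_localization_below
    (ρ c x₀ b₀ K₁ K₂ L : ℝ) (F : ℝ → ℝ)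
    (hρ : 0 < ρ) (hc : 0 < c) (hx₀ : 0 ≤ x₀) (hb₀ : 0 < b₀)
    (hF : ContDiff ℝ 1 F) (hF0 : F 0 = 0)
    (hF' : ∀ y : ℝ, -b₀ ≤ deriv F y ∧ deriv F y ≤ 0)
    (hK₁ : 1 ≤ K₁) (hK₂ : 0 < K₂)
    (hL : ρ + 2 * c / ρ < L)
    (hLineq : 2 * c * K₂ ≤ Real.exp (L - ρ) - (2 * c / ρ) * Real.exp (-L)) :
    ∀ T : ℝ, 1 ≤ T → ∀ β : ℝ, 0 < β → Real.log β + b₀ * β = -T * b₀ →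
    ∀ η N : ℝ, η = Real.exp (-L * T) → N = K₁ * β⁻¹ ^ 2 * Real.exp (2 * ρ * (T + β)) →
      η < N ∧
      ∀ u x : ℝ → ℝ, Admissible u → Trajectory F x₀ u x →
        IntegrableOn (fun t => Real.exp (-ρ * t) * u t) (Set.Ioi (0:ℝ)) →
        (∫ t in Set.Ioi (0:ℝ), Real.exp (-ρ * t) * u t) ≤ K₁ →
        IntegrableOn (fun t => Real.exp (-ρ * t) * x t) (Set.Ioi (0:ℝ)) →
        (∫ t in Set.Ioi (0:ℝ), Real.exp (-ρ * t) * x t) ≤ K₂ →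
        ObjIntegrable ρ c u x →
        ∃ u' x' : ℝ → ℝ,
          Admissible u' ∧ Trajectory F x₀ u' x' ∧
          (∀ᵐ t ∂(volume.restrict (Set.Icc (0:ℝ) T)), u' t = max (min (u t) N) η) ∧
          ObjIntegrable ρ c u' x' ∧
          objective ρ c u x ≤ objective ρ c u' x' := by
  intro T hT β hβ hβlog η N hη hN
  have hβe : β = Real.exp (-(b₀ * (T + β))) := by
    have h1 : -(b₀ * (T + β)) = Real.log β := by linarith
    rw [h1, Real.exp_log hβ]
  obtain ⟨hβ1, hlt⟩ := ULB.eta_lt hρ hc hb₀ hK₁ hL hT hβ hβe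
  rw [← hη, ← hN] at hlt
  refine ⟨hlt, ?_⟩
  intro u x hu hx hwu hwK hwx hwx2 hobj
  exact ULB.main_aux ρ c x₀ b₀ K₁ K₂ L F hρ hc hx₀ hb₀ hF hF0 hF' hK₁ hL hLineq T hT β hβ hβ1 hβe
    η N hη hN hlt u x hu hx hwu hwK hwx hwx2 hobj
end

section
/- Let ρ > 0, c > 0, x₀ ≥ 0, b₀ > 0, and let F : ℝ → ℝ be continuously differentiable with F(0) = 0, F'(0) < 0, −b₀ ≤ F'(y) ≤ 0 for all y ∈ ℝ, and lim_{y→+∞} F'(y) = −l for some l > 0. Let V(x₀) be the supremum of B(u,x) over all admissible controls u and trajectories x associated with u for which the integrand of B is Lebesgue integrable (this supremum is a real number). Then there exist admissible controls v_n (n ∈ ℕ), an admissible control v, trajectories x_n associated with v_n with integrable objective integrands, and for each T ∈ ℕ positive real numbers η_T ≤ N_T, such that: (i) B(v_n, x_n) → V(x₀) as n → ∞; (ii) for every T > 0, v_n converges to v weakly in L¹([0,T]), i.e. ∫₀^T v_n(t) g(t) dt → ∫₀^T v(t) g(t) dt for every bounded measurable g : [0,T] → ℝ; (iii) for every T ∈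 ℕ, for a.e. t ∈ [0,T] one has η_T ≤ v(t) ≤ N_T and η_T ≤ v_n(t) ≤ N_T for all n ≥ T. -/
open MeasureTheory Filter

lemma weak_seq {H : Type*} [NormedAddCommGroup H] [InnerProductSpace ℝ H] [CompleteSpace H]
    [TopologicalSpace.SeparableSpace H] (w : ℕ → H) (R : ℝ) (hR : ∀ n, ‖w n‖ ≤ R) :
    ∃ (w' : H) (φ : ℕ → ℕ), StrictMono φ ∧
      ∀ g : H, Tendsto (fun n => inner ℝ (w (φ n)) g) atTop (nhds (inner ℝ w' g)) := by
  have h := WeakDual.isSeqCompact_closedBall ℝ H 0 R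
  obtain ⟨d, -, φ, hφ, hd⟩ := h (x := fun n => StrongDual.toWeakDual (InnerProductSpace.toDual ℝ H (w n)))
    (by intro n; simp [hR n])
  refine ⟨(InnerProductSpace.toDual ℝ H).symm (WeakDual.toStrongDual d), φ, hφ, fun g => ?_⟩
  have := ((WeakDual.eval_continuous g).tendsto d).comp hd
  simpa [Function.comp_def] using this

lemma weak_compact (v : ℕ → ℝ → ℝ) (a A ρ : ℝ) (hρ : 0 < ρ) (ha : 0 < a)
    (hm : ∀ n, Measurable (v n))
    (hb : ∀ n t, 0 ≤ t → a * Real.exp (-ρ * t) ≤ v n t ∧ v n t ≤ A * Real.exp (ρ * t)) :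
    ∃ (vl : ℝ → ℝ) (φ : ℕ → ℕ), StrictMono φ ∧ Measurable vl ∧
      (∀ t, 0 ≤ t → a * Real.exp (-ρ * t) ≤ vl t ∧ vl t ≤ A * Real.exp (ρ * t)) ∧
      ∀ T : ℝ, 0 < T → ∀ g : ℝ → ℝ, Measurable g →
        (∃ C : ℝ, ∀ t ∈ Set.Icc (0:ℝ) T, |g t| ≤ C) →
        Tendsto (fun n => ∫ t in Set.Icc (0:ℝ) T, v (φ n) t * g t) atTop
          (nhds (∫ t in Set.Icc (0:ℝ) T, vl t * g t)) := by
  set μ : Measure ℝ := volume.restrict (Set.Ici 0) with hμ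
  set θ : ℝ → ℝ := fun t => Real.exp (-(ρ + 1) * t) with hθ
  have hθpos : ∀ t, 0 < θ t := fun t => Real.exp_pos _
  have hθm : Measurable θ := by fun_prop
  have hvpos : ∀ n t, 0 ≤ t → 0 < v n t := fun n t ht =>
    lt_of_lt_of_le (by positivity) (hb n t ht).1
  have haA : a ≤ A := by simpa using (hb 0 0 le_rfl).1.trans (hb 0 0 le_rfl).2
  have hD : MemLp (fun t => A * Real.exp (-t)) 2 μ := by
    rw [memLp_two_iff_integrable_sq (by fun_prop)]
    have : IntegrableOn (fun t => A ^ 2 * Real.exp (-2 * t)) (Set.Ici 0) := by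
      rw [integrableOn_Ici_iff_integrableOn_Ioi]
      exact (integrableOn_exp_mul_Ioi (by norm_num) 0).const_mul _
    refine this.congr (ae_of_all _ fun t => ?_)
    simp only [mul_pow, ← Real.exp_nat_mul]
    congr 2; push_cast; ring
  have hbd : ∀ n, ∀ᵐ t ∂μ, ‖v n t * θ t‖ ≤ ‖A * Real.exp (-t)‖ := by
    intro n
    filter_upwards [ae_restrict_mem measurableSet_Ici] with t ht
    rw [Real.norm_of_nonneg (mul_nonneg (hvpos n t ht).le (hθpos t).le),
      Real.norm_of_nonneg (by have := ha.le.trans haA; positivity)]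
    calc v n t * θ t ≤ (A * Real.exp (ρ * t)) * θ t := by
          gcongr; exact (hb n t ht).2
      _ = A * Real.exp (-t) := by
          rw [hθ, mul_assoc]; simp only [← Real.exp_add]; congr 2; ring
  have hw : ∀ n, MemLp (fun t => v n t * θ t) 2 μ := fun n =>
    hD.of_le ((hm n).mul hθm).aestronglyMeasurable (hbd n)
  have : Fact ((2:ENNReal) ≠ ⊤) := ⟨by norm_num⟩
  obtain ⟨w', φ, hφ, hlim⟩ := weak_seq (fun n => (hw n).toLp) ‖hD.toLp‖ (by
    intro n
    apply Lp.norm_le_norm_of_ae_le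
    filter_upwards [hbd n, (hw n).coeFn_toLp, hD.coeFn_toLp] with t h1 h2 h3
    rw [h2, h3]; exact h1)
  set W : ℝ → ℝ := fun t => w' t / θ t with hW
  have hWm : Measurable W := (Lp.stronglyMeasurable w').measurable.div hθm
  have key : ∀ T : ℝ, 0 < T → ∀ g : ℝ → ℝ, Measurable g →
        (∃ C : ℝ, ∀ t ∈ Set.Icc (0:ℝ) T, |g t| ≤ C) →
        IntegrableOn (fun t => W t * g t) (Set.Icc 0 T) ∧ 
        Tendsto (fun n => ∫ t in Set.Icc (0:ℝ) T, v (φ n) t * g t) atTop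
          (nhds (∫ t in Set.Icc (0:ℝ) T, W t * g t)) := by
    rintro T hT g hg ⟨C, hC⟩
    have hC0 : 0 ≤ C := (abs_nonneg _).trans (hC 0 ⟨le_rfl, hT.le⟩)
    have hGm : Measurable ((Set.Icc 0 T).indicator fun t => g t / θ t) :=
      (hg.div hθm).indicator measurableSet_Icc
    have hG : MemLp ((Set.Icc 0 T).indicator fun t => g t / θ t) 2 μ := by
      rw [memLp_indicator_iff_restrict measurableSet_Icc]
      have : IsFiniteMeasure (μ.restrict (Set.Icc 0 T)) := by
        constructor
        rw [hμ, Measure.restrict_restrict measurableSet_Icc, Measure.restrict_apply_univ]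
        exact (measure_mono Set.inter_subset_left).trans_lt measure_Icc_lt_top
      refine MemLp.of_bound (hg.div hθm).aestronglyMeasurable (C * Real.exp ((ρ+1) * T)) ?_
      filter_upwards [ae_restrict_mem measurableSet_Icc] with t ht
      rw [norm_div, Real.norm_eq_abs, Real.norm_of_nonneg (hθpos t).le, div_eq_mul_inv]
      have : (θ t)⁻¹ ≤ Real.exp ((ρ+1) * T) := by
        rw [hθ]; simp only [← Real.exp_neg]
        apply Real.exp_le_exp.2
        have := ht.2
        nlinarith
      exact mul_le_mul (hC t ht) this (by have := hθpos t; positivity) hC0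
    have hconv : ∀ f : ℝ → ℝ, ∀ f' : Lp ℝ 2 μ, f' =ᵐ[μ] (fun t => f t * θ t) →
        inner ℝ f' hG.toLp = ∫ t in Set.Icc 0 T, f t * g t := by
      intro f f' hf
      have hs : Set.Icc 0 T ∩ Set.Ici 0 = Set.Icc 0 T :=
        Set.inter_eq_left.2 fun t ht => ht.1
      rw [L2.inner_def]
      have : ∫ t, inner ℝ (f' t) ((hG.toLp _ : Lp ℝ 2 μ) t) ∂μ
          = ∫ t, (Set.Icc 0 T).indicator (fun t => f t * g t) t ∂μ := by
        apply integral_congr_ae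
        filter_upwards [hf, hG.coeFn_toLp] with t h1 h2
        rw [h1, h2]
        by_cases h : t ∈ Set.Icc 0 T
        · simp only [Set.indicator_of_mem h, RCLike.inner_apply, conj_trivial]
          have := (hθpos t).ne'
          field_simp
        · simp [Set.indicator_of_notMem h]
      rw [this, integral_indicator measurableSet_Icc, hμ,
        Measure.restrict_restrict measurableSet_Icc, hs]
    constructor
    · have h1 := L2.integrable_inner (𝕜 := ℝ) w' hG.toLp
      have h2 : Integrable ((Set.Icc 0 T).indicator (fun t => W t * g t)) μ := by
        refine h1.congr ?_
        filter_upwards [hG.coeFn_toLp] with t h2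
        rw [h2]
        by_cases h : t ∈ Set.Icc 0 T
        · simp only [Set.indicator_of_mem h, RCLike.inner_apply, conj_trivial, hW]
          ring
        · simp [Set.indicator_of_notMem h]
      rw [integrable_indicator_iff measurableSet_Icc, IntegrableOn, hμ,
        Measure.restrict_restrict measurableSet_Icc,
        Set.inter_eq_left.2 (fun t ht => ht.1)] at h2
      exact h2
    · have h1 := hlim hG.toLp
      rw [hconv W w' (ae_of_all _ fun t => by
        have := (hθpos t).ne'
        simp only [hW]; field_simp)] at h1
      refine h1.congr fun n => ?_
      exact hconv (v (φ n)) _ (hw (φ n)).coeFn_toLp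
  have hvint : ∀ n T, IntegrableOn (v n) (Set.Icc 0 T) := by
    intro n T
    refine Integrable.mono' (g := fun t => A * Real.exp (ρ * t)) ?_ (hm n).aestronglyMeasurable ?_
    · exact (by fun_prop : Continuous fun t => A * Real.exp (ρ * t)).integrableOn_Icc
    · filter_upwards [ae_restrict_mem measurableSet_Icc] with t ht
      rw [Real.norm_of_nonneg (hvpos n t ht.1).le]; exact (hb n t ht.1).2
  have hbounds : ∀ T : ℝ, 0 < T → ∀ᵐ t ∂(volume.restrict (Set.Icc 0 T)),
      a * Real.exp (-ρ * t) ≤ W t ∧ W t ≤ A * Real.exp (ρ * t) := by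
    intro T hT
    have hWi : IntegrableOn W (Set.Icc 0 T) := by
      simpa using (key T hT (fun _ => 1) measurable_const ⟨1, by simp⟩).1
    have hset : ∀ s, MeasurableSet s → Tendsto (fun n => ∫ t in s, v (φ n) t ∂(volume.restrict (Set.Icc 0 T))) atTop
        (nhds (∫ t in s, W t ∂(volume.restrict (Set.Icc 0 T)))) := by
      intro s hs
      have := (key T hT (s.indicator fun _ => 1) (measurable_const.indicator hs) ⟨1, by
        intro t _
        by_cases h : t ∈ s <;> simp [h]⟩).2
      have e : ∀ f : ℝ → ℝ, ∫ t in Set.Icc 0 T, f t * s.indicator (fun _ => 1) t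
          = ∫ t in s, f t ∂(volume.restrict (Set.Icc 0 T)) := by
        intro f
        rw [← integral_indicator hs]
        congr 1; ext t
        by_cases h : t ∈ s <;> simp [h]
      simpa only [e] using this
    have c1 : IntegrableOn (fun t => a * Real.exp (-ρ * t)) (Set.Icc 0 T) :=
      (by fun_prop : Continuous fun t => a * Real.exp (-ρ * t)).integrableOn_Icc
    have c2 : IntegrableOn (fun t => A * Real.exp (ρ * t)) (Set.Icc 0 T) :=
      (by fun_prop : Continuous fun t => A * Real.exp (ρ * t)).integrableOn_Icc
    have mem : ∀ s, MeasurableSet s →  ∀ᵐ t ∂((volume.restrict (Set.Icc 0 T)).restrict s), t ∈ Set.Icc 0 T :=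
      fun s hs => ae_restrict_of_ae (ae_restrict_mem measurableSet_Icc)
    have l1 := ae_le_of_forall_setIntegral_le c1 hWi (fun s hs _ => by
      refine ge_of_tendsto' (hset s hs) fun n => ?_
      refine integral_mono_ae c1.integrableOn (hvint _ T).integrableOn ?_
      filter_upwards [mem s hs] with t ht using (hb _ t ht.1).1)
    have l2 := ae_le_of_forall_setIntegral_le hWi c2 (fun s hs _ => by
      refine le_of_tendsto' (hset s hs) fun n => ?_
      refine integral_mono_ae (hvint _ T).integrableOn c2.integrableOn ?_
      filter_upwards [mem s hs] with t ht using (hb _ t ht.1).2)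
    filter_upwards [l1, l2] with t h1 h2 using ⟨h1, h2⟩
  refine ⟨fun t => max (a * Real.exp (-ρ * t)) (min (W t) (A * Real.exp (ρ * t))), φ, hφ,
    by fun_prop, fun t ht => ⟨le_max_left _ _, max_le ?_ (min_le_right _ _)⟩, ?_⟩
  · exact (hb 0 t ht).1.trans (hb 0 t ht).2
  · intro T hT g hg hC
    have h1 := (key T hT g hg hC).2
    convert h1 using 2
    apply integral_congr_ae
    filter_upwards [hbounds T hT] with t ht
    rw [min_eq_left ht.2, max_eq_right ht.1]

/-- normalised controlled trajectories -/
structure Nice (F : ℝ → ℝ) (x₀ : ℝ) (u x : ℝ → ℝ) : Prop where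
  meas : Measurable u
  int : ∀ a b, IntervalIntegrable u volume a b
  pos : ∀ t, 0 < u t
  cont : Continuous x
  eq : ∀ t, 0 ≤ t → x t = x₀ + ∫ s in (0:ℝ)..t, (F (x s) + u s)

/-- what we use about `F` -/
structure GoodF (F : ℝ → ℝ) (b₀ : ℝ) : Prop where
  cont : Continuous F
  zero : F 0 = 0
  anti : Antitone F
  lip : ∀ y z, y ≤ z → F y - F z ≤ b₀ * (z - y)

lemma goodF (F : ℝ → ℝ) (b₀ : ℝ) (hF : ContDiff ℝ 1 F) (hF0 : F 0 = 0)
    (hF' : ∀ y : ℝ, -b₀ ≤ deriv F y ∧ deriv F y ≤ 0) : GoodF F b₀ := by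
  have hd : Differentiable ℝ F := hF.differentiable (by norm_num)
  refine ⟨hF.continuous, hF0, antitone_of_deriv_nonpos hd fun y => (hF' y).2, ?_⟩
  have : Monotone (fun y => F y + b₀ * y) := by
    apply monotone_of_deriv_nonneg (by fun_prop)
    intro y
    have h : HasDerivAt (fun y => F y + b₀ * y) (deriv F y + b₀ * 1) y :=
      (hd y).hasDerivAt.add ((hasDerivAt_id y).const_mul b₀)
    rw [h.deriv]; linarith [(hF' y).1]
  intro y z hyz
  have := this hyz
  simp only at this
  linarith

lemma GoodF.lower {F : ℝ → ℝ} {b₀ : ℝ} (h : GoodF F b₀) {y : ℝ} (hy : 0 ≤ y) :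
    - F y ≤ b₀ * y := by
  have := h.lip 0 y hy
  rw [h.zero] at this; linarith

lemma Nice.fint {F : ℝ → ℝ} {x₀ b₀ : ℝ} {u x : ℝ → ℝ} (hF : GoodF F b₀) (h : Nice F x₀ u x)
    (a b : ℝ) : IntervalIntegrable (fun s => F (x s) + u s) volume a b :=
  ((hF.cont.comp h.cont).intervalIntegrable a b).add (h.int a b)

lemma Nice.incr {F : ℝ → ℝ} {x₀ b₀ : ℝ} {u x : ℝ → ℝ} (hF : GoodF F b₀) (h : Nice F x₀ u x)
    {s t : ℝ} (hs : 0 ≤ s) (hst : s ≤ t) :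
    x t = x s + ∫ r in s..t, (F (x r) + u r) := by
  rw [h.eq t (hs.trans hst), h.eq s hs, add_assoc,
    intervalIntegral.integral_add_adjacent_intervals (h.fint hF _ _) (h.fint hF _ _)]

lemma Nice.nonneg {F : ℝ → ℝ} {x₀ b₀ : ℝ} {u x : ℝ → ℝ} (hF : GoodF F b₀) (hx₀ : 0 ≤ x₀)
    (h : Nice F x₀ u x) (t : ℝ) (ht : 0 ≤ t) : 0 ≤ x t := by
  by_contra hneg
  push Not at hneg
  have hc : IsCompact (Set.Icc 0 t ∩ x ⁻¹' Set.Ici 0) :=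
    isCompact_Icc.inter_right (isClosed_Ici.preimage h.cont)
  have hne : (Set.Icc 0 t ∩ x ⁻¹' Set.Ici 0).Nonempty := by
    refine ⟨0, ⟨le_rfl, ht⟩, ?_⟩
    simp [h.eq 0 le_rfl, hx₀]
  obtain ⟨⟨h0, h1⟩, h2⟩ := hc.sSup_mem hne
  set s := sSup (Set.Icc 0 t ∩ x ⁻¹' Set.Ici 0) with hs
  have hlt : ∀ r ∈ Set.Ioc s t, x r < 0 := by
    intro r hr
    by_contra hr'
    push Not at hr'
    exact absurd (le_csSup hc.bddAbove ⟨⟨h0.trans hr.1.le, hr.2⟩, hr'⟩) (not_le.2 hr.1)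
  have h3 := h.incr hF h0 h1
  have h4 : 0 ≤ ∫ r in s..t, (F (x r) + u r) := by
    rw [intervalIntegral.integral_of_le h1]
    refine setIntegral_nonneg measurableSet_Ioc fun r hr => ?_
    have := hF.anti (hlt r hr).le
    rw [hF.zero] at this
    linarith [h.pos r]
  have h5 : 0 ≤ x s := h2
  linarith

lemma ac_arctan {X : ℝ → ℝ} {a b : ℝ} (h : AbsolutelyContinuousOnInterval X a b) :
    AbsolutelyContinuousOnInterval (fun t => Real.arctan (X t)) a b := by
  rw [absolutelyContinuousOnInterval_iff] at h ⊢
  have hl : LipschitzWith 1 Real.arctan := by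
    apply lipschitzWith_of_nnnorm_deriv_le Real.differentiable_arctan
    intro x
    rw [← NNReal.coe_le_coe, coe_nnnorm, Real.deriv_arctan, Real.norm_of_nonneg (by positivity)]
    simp only [NNReal.coe_one]
    rw [div_le_one (by positivity)]; nlinarith [sq_nonneg x]
  intro ε hε
  obtain ⟨δ, hδ, H⟩ := h ε hε
  refine ⟨δ, hδ, fun E hE hs => lt_of_le_of_lt (Finset.sum_le_sum fun i _ => ?_) (H E hE hs)⟩
  simpa using hl.dist_le_mul (X (E.2 i).1) (X (E.2 i).2)

lemma int_exp (ρ : ℝ) (hρ : 0 < ρ) : IntegrableOn (fun t => Real.exp (-ρ * t)) (Set.Ioi 0) ∧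
    ∫ t in Set.Ioi (0:ℝ), Real.exp (-ρ * t) = 1 / ρ := by
  refine ⟨integrableOn_exp_mul_Ioi (by linarith) 0, ?_⟩
  rw [integral_exp_mul_Ioi (by linarith)]
  simp [neg_div]

lemma ac_ftc {G g : ℝ → ℝ} {a b : ℝ} (h : AbsolutelyContinuousOnInterval G a b)
    (hd : ∀ᵐ t, HasDerivAt G (g t) t) : ∫ t in a..b, g t = G b - G a := by
  rw [← h.integral_deriv_eq_sub]
  apply intervalIntegral.integral_congr_ae
  filter_upwards [hd] with t ht _ using ht.deriv.symm

lemma loc_of_int {f : ℝ → ℝ} (h : ∀ a b, IntervalIntegrable f volume a b) :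
    LocallyIntegrable f volume := by
  rw [locallyIntegrable_iff]
  intro k hk
  obtain ⟨r, hr⟩ := hk.isBounded.subset_closedBall 0
  rw [Real.closedBall_eq_Icc] at hr
  refine IntegrableOn.mono_set ?_ hr
  by_cases hh : (0:ℝ) - r ≤ 0 + r
  · rw [← intervalIntegrable_iff_integrableOn_Icc_of_le hh]; exact h _ _
  · rw [Set.Icc_eq_empty hh]; exact integrableOn_empty

lemma lemA {F : ℝ → ℝ} {x₀ b₀ ρ : ℝ} {u x : ℝ → ℝ} (hF : GoodF F b₀) (hx₀ : 0 ≤ x₀)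
    (hρ : 0 < ρ) (hb₀ : 0 < b₀) (h : Nice F x₀ u x) :
    IntegrableOn (fun t => Real.exp (-ρ * t) * (u t / (1 + x t ^ 2))) (Set.Ioi 0) ∧
    ∫ t in Set.Ioi (0:ℝ), Real.exp (-ρ * t) * (u t / (1 + x t ^ 2)) ≤ Real.pi + b₀ / ρ := by
  have hxc := h.cont
  have hi : ∀ a b, IntervalIntegrable (fun t => Real.exp (-ρ * t) * (u t / (1 + x t ^ 2)))
      volume a b := by
    intro a b
    have hc : Continuous (fun t => Real.exp (-ρ * t) / (1 + x t ^ 2)) := by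
      refine Continuous.div (by fun_prop) (by fun_prop) fun t => by positivity
    refine ((h.int a b).continuousOn_mul hc.continuousOn).congr ?_
    intro t _
    simp only; ring
  have key : ∀ T, 0 ≤ T → ∫ t in (0:ℝ)..T, Real.exp (-ρ * t) * (u t / (1 + x t ^ 2))
      ≤ Real.pi + b₀ / ρ := by
    intro T hT
    set X : ℝ → ℝ := fun t => x₀ + ∫ s in (0:ℝ)..t, (F (x s) + u s) with hX
    have hXx : ∀ t, 0 ≤ t → X t = x t := fun t ht => (h.eq t ht).symm
    have hXac : AbsolutelyContinuousOnInterval X 0 T := by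
      have h1 := (h.fint hF 0 T).absolutelyContinuousOnInterval_intervalIntegral
        (c := 0) (by simp)
      have h2 : AbsolutelyContinuousOnInterval (fun _ : ℝ => x₀) 0 T :=
        ((LipschitzWith.const x₀).lipschitzOnWith (s := Set.uIcc 0 T)).absolutelyContinuousOnInterval
      exact h2.add h1
    have hEac : AbsolutelyContinuousOnInterval (fun t => Real.exp (-ρ * t)) 0 T := by
      refine ContDiffOn.absolutelyContinuousOnInterval ?_
      exact (by fun_prop : ContDiff ℝ 1 (fun t => Real.exp (-ρ * t))).contDiffOn
    have hGac := hEac.fun_mul (ac_arctan hXac)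
    have hder : ∀ᵐ t, HasDerivAt (fun t => Real.exp (-ρ * t) * Real.arctan (X t))
        (Real.exp (-ρ * t) * (-ρ * 1) * Real.arctan (X t)
          + Real.exp (-ρ * t) * (1 / (1 + X t ^ 2) * (F (x t) + u t))) t := by
      filter_upwards [LocallyIntegrable.ae_hasDerivAt_integral (loc_of_int (h.fint hF))] with t ht
      have h1 : HasDerivAt X (F (x t) + u t) t := by
        simpa [hX] using (ht 0).const_add x₀
      exact (((hasDerivAt_id t).const_mul (-ρ)).exp).mul h1.arctan
    have hftc := ac_ftc hGac hder
    have hXc : ContinuousOn X (Set.uIcc 0 T) := hXac.continuousOn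
    have hpi := Real.pi_pos
    have hI1 : IntervalIntegrable (fun t => Real.exp (-ρ * t) * (-ρ * 1) * Real.arctan (X t)
          + Real.exp (-ρ * t) * (1 / (1 + X t ^ 2) * (F (x t) + u t))) volume 0 T := by
      apply IntervalIntegrable.add
      · apply ContinuousOn.intervalIntegrable
        exact ContinuousOn.mul (by fun_prop) (Real.continuous_arctan.comp_continuousOn hXc)
      · have hc : ContinuousOn (fun t => Real.exp (-ρ * t) * (1 / (1 + X t ^ 2))) (Set.uIcc 0 T) := by
          refine ContinuousOn.mul (by fun_prop) (ContinuousOn.div (by fun_prop) (by fun_prop) ?_)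
          intro t _; positivity
        refine ((h.fint hF 0 T).continuousOn_mul hc).congr ?_
        intro t _
        simp only; ring
    have hI2 : IntervalIntegrable (fun t => Real.exp (-ρ * t) * (ρ * (Real.pi / 2) + b₀)) volume 0 T :=
      (by fun_prop : Continuous fun t => Real.exp (-ρ * t) * (ρ * (Real.pi / 2) + b₀)).intervalIntegrable _ _
    have hmono := intervalIntegral.integral_mono_on hT (hi 0 T) (hI1.add hI2) (by
      intro t ht
      rw [hXx t ht.1]
      have h1 := h.nonneg hF hx₀ t ht.1
      have h2 := hF.lower h1
      have h3 := (Real.arctan_lt_pi_div_two (x t)).le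
      have h4 : - (F (x t) / (1 + x t ^ 2)) ≤ b₀ := by
        rw [← neg_div, div_le_iff₀ (by positivity)]
        nlinarith [sq_nonneg (x t - 1), sq_nonneg (x t)]
      have h5 : u t / (1 + x t ^ 2) ≤ (-ρ * 1) * Real.arctan (x t)
          + (1 / (1 + x t ^ 2) * (F (x t) + u t)) + (ρ * (Real.pi / 2) + b₀) := by
        have e : (1 / (1 + x t ^ 2) * (F (x t) + u t)) = F (x t) / (1 + x t ^ 2) + u t / (1 + x t ^ 2) := by ring
        rw [e]
        nlinarith
      calc _ ≤ Real.exp (-ρ * t) * _ := mul_le_mul_of_nonneg_left h5 (Real.exp_pos _).le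
        _ = _ := by ring)
    rw [intervalIntegral.integral_add hI1 hI2, hftc, intervalIntegral.integral_mul_const] at hmono
    have hle : ∫ t in (0:ℝ)..T, Real.exp (-ρ * t) ≤ 1 / ρ := by
      rw [← (int_exp ρ hρ).2, intervalIntegral.integral_of_le hT]
      apply setIntegral_mono_set (int_exp ρ hρ).1
      · exact ae_of_all _ fun t => (Real.exp_pos _).le
      · exact Set.Ioc_subset_Ioi_self.eventuallyLE
    have hX0 : X 0 = x₀ := by simp [hX]
    rw [hX0] at hmono
    have h6 : 0 ≤ Real.arctan x₀ := Real.arctan_nonneg.2 hx₀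
    have h7 : Real.exp (-ρ * T) * Real.arctan (X T) ≤ Real.pi / 2 := by
      have h8 : Real.exp (-ρ * T) ≤ 1 := Real.exp_le_one_iff.2 (by nlinarith)
      have h9 := (Real.arctan_lt_pi_div_two (X T)).le
      have h10 := Real.exp_pos (-ρ * T)
      nlinarith
    have h11 : (∫ t in (0:ℝ)..T, Real.exp (-ρ * t)) * (ρ * (Real.pi / 2) + b₀) ≤ 1 / ρ * (ρ * (Real.pi / 2) + b₀) :=
      mul_le_mul_of_nonneg_right hle (by positivity)
    have h12 : 1 / ρ * (ρ * (Real.pi / 2) + b₀) = Real.pi / 2 + b₀ / ρ := by field_simp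
    simp only [mul_zero, Real.exp_zero, one_mul] at hmono
    linarith
  have hIntg : IntegrableOn (fun t => Real.exp (-ρ * t) * (u t / (1 + x t ^ 2))) (Set.Ioi 0) := by
    refine integrableOn_Ioi_of_intervalIntegral_norm_bounded (Real.pi + b₀ / ρ) 0
      (fun n : ℕ => ?_) tendsto_natCast_atTop_atTop (Eventually.of_forall fun n => ?_)
    · have := (hi 0 n).1
      exact this
    · refine le_trans (le_of_eq ?_) (key n n.cast_nonneg)
      apply intervalIntegral.integral_congr
      intro t _
      have := h.pos t
      simp only
      rw [Real.norm_of_nonneg (by positivity)]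
  refine ⟨hIntg, ?_⟩
  have := intervalIntegral_tendsto_integral_Ioi 0 hIntg tendsto_natCast_atTop_atTop
  exact le_of_tendsto' this fun n => key n n.cast_nonneg

lemma tonelli {m Φ k : ℝ → ℝ} (hm : Measurable m) (hm0 : ∀ t, 0 ≤ m t)
    (hmi : ∀ a b, IntervalIntegrable m volume a b) (hΦ : Continuous Φ)
    (hΦ0 : ∀ t, 0 ≤ t → 0 ≤ Φ t) (hk : Measurable k) (hk0 : ∀ t, 0 ≤ k t)
    (hkle : ∀ s, 0 < s → k s ≤ ∫ t in s..(s+1), Φ t)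
    (hIntg : IntegrableOn (fun t => Φ t * ∫ s in (0:ℝ)..t, m s) (Set.Ioi 0)) :
    IntegrableOn (fun t => m t * k t) (Set.Ioi 0) ∧
    ∫ t in Set.Ioi (0:ℝ), m t * k t ≤ ∫ t in Set.Ioi (0:ℝ), Φ t * ∫ s in (0:ℝ)..t, m s := by
  have hM0 : ∀ t, 0 ≤ t → 0 ≤ ∫ s in (0:ℝ)..t, m s := fun t ht =>
    intervalIntegral.integral_nonneg ht fun s _ => hm0 s
  have hΦm := hΦ.measurable
  have hle : ∫⁻ t in Set.Ioi (0:ℝ), ENNReal.ofReal (m t * k t) ≤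
      ∫⁻ t in Set.Ioi (0:ℝ), ENNReal.ofReal (Φ t * ∫ s in (0:ℝ)..t, m s) := by
    have h1 : ∫⁻ t in Set.Ioi (0:ℝ), ENNReal.ofReal (Φ t * ∫ s in (0:ℝ)..t, m s) =
        ∫⁻ t in Set.Ioi (0:ℝ), ∫⁻ s in Set.Ioi (0:ℝ),
          {p : ℝ × ℝ | p.2 ≤ p.1}.indicator (fun p => ENNReal.ofReal (Φ p.1) * ENNReal.ofReal (m p.2)) (t, s) := by
      refine setLIntegral_congr_fun measurableSet_Ioi fun t (ht : 0 < t) => ?_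
      rw [ENNReal.ofReal_mul (hΦ0 t ht.le), intervalIntegral.integral_of_le ht.le,
        ofReal_integral_eq_lintegral_ofReal (hmi 0 t).1 (ae_of_all _ hm0),
        ← lintegral_const_mul _ (by fun_prop)]
      have : ∀ s, {p : ℝ × ℝ | p.2 ≤ p.1}.indicator
          (fun p => ENNReal.ofReal (Φ p.1) * ENNReal.ofReal (m p.2)) (t, s)
          = (Set.Iic t).indicator (fun s => ENNReal.ofReal (Φ t) * ENNReal.ofReal (m s)) s := by
        intro s
        by_cases h : s ≤ t <;> simp [Set.indicator, h]
      simp_rw [this]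
      rw [lintegral_indicator measurableSet_Iic, Measure.restrict_restrict measurableSet_Iic,
        Set.inter_comm, Set.Ioi_inter_Iic]
    have hmeas : Measurable ({p : ℝ × ℝ | p.2 ≤ p.1}.indicator
        (fun p : ℝ × ℝ => ENNReal.ofReal (Φ p.1) * ENNReal.ofReal (m p.2))) := by
      refine Measurable.indicator (by fun_prop) (measurableSet_le measurable_snd measurable_fst)
    rw [h1, lintegral_lintegral_swap (by exact hmeas.aemeasurable)]
    refine setLIntegral_mono' measurableSet_Ioi fun s (hs : 0 < s) => ?_
    have hsub : Set.Ioc s (s+1) ⊆ Set.Ioi 0 := fun t ht => hs.trans ht.1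
    calc ENNReal.ofReal (m s * k s) ≤ ENNReal.ofReal (m s) * ENNReal.ofReal (∫ t in s..(s+1), Φ t) := by
          rw [← ENNReal.ofReal_mul (hm0 s)]
          exact ENNReal.ofReal_le_ofReal (mul_le_mul_of_nonneg_left (hkle s hs) (hm0 s))
      _ = ∫⁻ t in Set.Ioc s (s+1), ENNReal.ofReal (m s) * ENNReal.ofReal (Φ t) := by
          rw [intervalIntegral.integral_of_le (by linarith),
            ofReal_integral_eq_lintegral_ofReal (hΦ.intervalIntegrable s (s+1)).1 ?_,
            lintegral_const_mul _ (by fun_prop)]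
          filter_upwards [ae_restrict_mem measurableSet_Ioc] with t ht using hΦ0 t (hs.trans ht.1).le
      _ ≤ ∫⁻ t in Set.Ioc s (s+1), {p : ℝ × ℝ | p.2 ≤ p.1}.indicator
            (fun p => ENNReal.ofReal (Φ p.1) * ENNReal.ofReal (m p.2)) (t, s) := by
          refine setLIntegral_mono' measurableSet_Ioc fun t ht => ?_
          rw [Set.indicator_of_mem (show (t, s) ∈ {p : ℝ × ℝ | p.2 ≤ p.1} from ht.1.le), mul_comm]
      _ ≤ _ := lintegral_mono_set hsub
  have hfin : ∫⁻ t in Set.Ioi (0:ℝ), ENNReal.ofReal (Φ t * ∫ s in (0:ℝ)..t, m s) =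
      ENNReal.ofReal (∫ t in Set.Ioi (0:ℝ), Φ t * ∫ s in (0:ℝ)..t, m s) := by
    rw [ofReal_integral_eq_lintegral_ofReal hIntg]
    filter_upwards [ae_restrict_mem measurableSet_Ioi] with t ht
    exact mul_nonneg (hΦ0 t (le_of_lt ht)) (hM0 t (le_of_lt ht))
  have hi : IntegrableOn (fun t => m t * k t) (Set.Ioi 0) := by
    refine ⟨(hm.mul hk).aestronglyMeasurable, ?_⟩
    rw [hasFiniteIntegral_iff_ofReal (ae_of_all _ fun t => mul_nonneg (hm0 t) (hk0 t))]
    exact hle.trans_lt (by rw [hfin]; exact ENNReal.ofReal_lt_top)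
  refine ⟨hi, ?_⟩
  rw [hfin, ← ofReal_integral_eq_lintegral_ofReal hi
    (ae_of_all _ fun t => mul_nonneg (hm0 t) (hk0 t))] at hle
  refine (ENNReal.ofReal_le_ofReal_iff ?_).1 hle
  exact setIntegral_nonneg measurableSet_Ioi fun t ht =>
    mul_nonneg (hΦ0 t (le_of_lt ht)) (hM0 t (le_of_lt ht))

lemma Nice.incr_ge {F : ℝ → ℝ} {x₀ b₀ : ℝ} {u x : ℝ → ℝ} (hF : GoodF F b₀) (hx₀ : 0 ≤ x₀)
    (hb₀ : 0 < b₀) (h : Nice F x₀ u x) {s t T : ℝ} (hs : 0 ≤ s) (hst : s ≤ t) (htT : t ≤ T) :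
    x s + (∫ r in s..t, u r) ≤ x t + b₀ * ∫ r in s..T, x r := by
  have hxc := h.cont
  have h1 := h.incr hF hs hst
  rw [intervalIntegral.integral_add (by exact (hF.cont.comp h.cont).intervalIntegrable s t) (h.int s t)] at h1
  have h2 : ∫ r in s..t, -(b₀ * x r) ≤ ∫ r in s..t, F (x r) := by
    refine intervalIntegral.integral_mono_on hst (Continuous.intervalIntegrable (by fun_prop) _ _)
      ((hF.cont.comp h.cont).intervalIntegrable s t) fun r hr => ?_
    have := hF.lower (h.nonneg hF hx₀ r (hs.trans hr.1))
    linarith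
  rw [intervalIntegral.integral_neg, intervalIntegral.integral_const_mul] at h2
  have h3 : ∫ r in s..t, x r ≤ ∫ r in s..T, x r := by
    rw [← intervalIntegral.integral_add_adjacent_intervals (hxc.intervalIntegrable s t)
      (hxc.intervalIntegrable t T)]
    have : 0 ≤ ∫ r in t..T, x r := intervalIntegral.integral_nonneg htT fun r hr =>
      h.nonneg hF hx₀ r (hs.trans (hst.trans hr.1))
    linarith
  have h4 := mul_le_mul_of_nonneg_left h3 hb₀.le
  linarith

lemma win_upper {F : ℝ → ℝ} {x₀ b₀ : ℝ} {u x : ℝ → ℝ} (hF : GoodF F b₀) (hx₀ : 0 ≤ x₀)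
    (hb₀ : 0 < b₀) (h : Nice F x₀ u x) (t : ℝ) (ht : 0 ≤ t) :
    x t ≤ (1 + b₀) * ∫ r in t..(t+1), x r := by
  have hxc := h.cont
  have h1 := intervalIntegral.integral_mono_on (μ := volume) (a := t) (b := t+1) (by linarith)
    (f := fun _ => x t) (g := fun r => x r + b₀ * ∫ r in t..(t+1), x r) (Continuous.intervalIntegrable (by fun_prop) _ _) (Continuous.intervalIntegrable (by fun_prop) _ _)
    (fun r hr => by
      have h2 := h.incr_ge hF hx₀ hb₀ ht hr.1 hr.2
      have : 0 ≤ ∫ r in t..r, u r := intervalIntegral.integral_nonneg hr.1 fun r _ => (h.pos r).le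
      linarith)
  rw [intervalIntegral.integral_add (Continuous.intervalIntegrable (by fun_prop) _ _) (Continuous.intervalIntegrable (by fun_prop) _ _)] at h1
  simp at h1
  linarith

lemma win_lower {F : ℝ → ℝ} {x₀ b₀ : ℝ} {u x : ℝ → ℝ} (hF : GoodF F b₀) (hx₀ : 0 ≤ x₀)
    (hb₀ : 0 < b₀) (h : Nice F x₀ u x) (s e : ℝ) (hs : 0 ≤ s) (he : ∀ r ∈ Set.Icc s (s+1), e ≤ u r) :
    e / 2 ≤ (1 + b₀) * ∫ r in s..(s+1), x r := by
  have hxc := h.cont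
  have h1 := intervalIntegral.integral_mono_on (μ := volume) (a := s) (b := s+1) (by linarith)
    (f := fun r => (r - s) * e) (g := fun r => x r + b₀ * ∫ r in s..(s+1), x r) (Continuous.intervalIntegrable (by fun_prop) _ _) (Continuous.intervalIntegrable (by fun_prop) _ _)
    (fun r hr => by
      have h2 := h.incr_ge hF hx₀ hb₀ hs hr.1 hr.2
      have h3 : ∫ q in s..r, e ≤ ∫ q in s..r, u q :=
        intervalIntegral.integral_mono_on hr.1 (Continuous.intervalIntegrable continuous_const _ _) (h.int _ _) fun q hq =>
          he q ⟨hq.1, hq.2.trans hr.2⟩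
      rw [intervalIntegral.integral_const, smul_eq_mul] at h3
      linarith [h.nonneg hF hx₀ s hs])
  rw [intervalIntegral.integral_add (Continuous.intervalIntegrable (by fun_prop) _ _) (Continuous.intervalIntegrable (by fun_prop) _ _), intervalIntegral.integral_mul_const,
    intervalIntegral.integral_sub (Continuous.intervalIntegrable (by fun_prop) _ _) (Continuous.intervalIntegrable (by fun_prop) _ _), integral_id] at h1
  simp at h1
  nlinarith

lemma log_bound {u x c : ℝ} (hu : 0 < u) (hc : 0 < c) :
    Real.log u ≤ u / (1 + x ^ 2) + c / 2 * x ^ 2 + |c / 2 - 2 - Real.log (c / 2)| := by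
  have hy : 0 < 1 + x ^ 2 := by positivity
  have h1 := Real.log_le_sub_one_of_pos (div_pos hu hy)
  rw [Real.log_div hu.ne' hy.ne'] at h1
  have h2 := Real.log_le_sub_one_of_pos (mul_pos (half_pos hc) hy)
  rw [Real.log_mul (half_pos hc).ne' hy.ne'] at h2
  have := le_abs_self (c / 2 - 2 - Real.log (c / 2))
  linarith

lemma obj_bound {F : ℝ → ℝ} {x₀ b₀ ρ c : ℝ} {u x : ℝ → ℝ} (hF : GoodF F b₀) (hx₀ : 0 ≤ x₀)
    (hρ : 0 < ρ) (hb₀ : 0 < b₀) (hc : 0 < c) (h : Nice F x₀ u x) (ho : ObjIntegrable ρ c u x) :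
    IntegrableOn (fun t => Real.exp (-ρ * t) * x t ^ 2) (Set.Ioi 0) ∧
    IntegrableOn (fun t => Real.exp (-ρ * t) * Real.log (u t)) (Set.Ioi 0) ∧
    c / 2 * ∫ t in Set.Ioi (0:ℝ), Real.exp (-ρ * t) * x t ^ 2 ≤
      Real.pi + b₀ / ρ + |c / 2 - 2 - Real.log (c / 2)| / ρ - objective ρ c u x := by
  obtain ⟨hA, hA'⟩ := lemA hF hx₀ hρ hb₀ h
  obtain ⟨hE, hE'⟩ := int_exp ρ hρ
  have hxc := h.cont
  set C := |c / 2 - 2 - Real.log (c / 2)| with hC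
  have hpt : ∀ t, c / 2 * (Real.exp (-ρ * t) * x t ^ 2) ≤
      (Real.exp (-ρ * t) * (u t / (1 + x t ^ 2)) + Real.exp (-ρ * t) * C)
        - Real.exp (-ρ * t) * (Real.log (u t) - c * (x t) ^ 2) := by
    intro t
    have h1 := log_bound (x := x t) (h.pos t) hc
    have h2 := mul_le_mul_of_nonneg_left h1 (Real.exp_pos (-ρ * t)).le
    rw [← hC] at h2
    linarith
  have hR : IntegrableOn (fun t => (Real.exp (-ρ * t) * (u t / (1 + x t ^ 2)) + Real.exp (-ρ * t) * C)
        - Real.exp (-ρ * t) * (Real.log (u t) - c * (x t) ^ 2)) (Set.Ioi 0) :=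
    (hA.add (hE.mul_const C)).sub ho
  have hx2 : IntegrableOn (fun t => c / 2 * (Real.exp (-ρ * t) * x t ^ 2)) (Set.Ioi 0) := by
    refine Integrable.mono' hR (by fun_prop) (ae_of_all _ fun t => ?_)
    rw [Real.norm_of_nonneg (by positivity)]; exact hpt t
  have hx3 : IntegrableOn (fun t => Real.exp (-ρ * t) * x t ^ 2) (Set.Ioi 0) := by
    refine (hx2.const_mul (2 / c)).congr (ae_of_all _ fun t => ?_)
    simp only; field_simp
  refine ⟨hx3, ?_, ?_⟩
  · refine (Integrable.add ho (hx3.const_mul c)).congr (ae_of_all _ fun t => ?_)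
    simp only [Pi.add_apply]; ring
  · have := integral_mono hx2 hR hpt
    rw [integral_const_mul, integral_sub (by exact hA.add (hE.mul_const C)) ho, integral_add hA (hE.mul_const C), integral_mul_const, hE'] at this
    have e : objective ρ c u x = ∫ t in Set.Ioi (0:ℝ), Real.exp (-ρ * t) * (Real.log (u t) - c * (x t) ^ 2) := rfl
    rw [e]
    have e2 : 1 / ρ * C = C / ρ := by ring
    rw [e2] at this
    linarith

lemma obj_int {F : ℝ → ℝ} {x₀ b₀ ρ c : ℝ} {u x ℓ : ℝ → ℝ} (hF : GoodF F b₀) (hx₀ : 0 ≤ x₀)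
    (hρ : 0 < ρ) (hb₀ : 0 < b₀) (hc : 0 < c) (h : Nice F x₀ u x)
    (hx : IntegrableOn (fun t => Real.exp (-ρ * t) * x t ^ 2) (Set.Ioi 0))
    (hℓ : IntegrableOn (fun t => Real.exp (-ρ * t) * ℓ t) (Set.Ioi 0))
    (hℓu : ∀ t, 0 < t → ℓ t ≤ Real.log (u t)) : ObjIntegrable ρ c u x := by
  obtain ⟨hA, hA'⟩ := lemA hF hx₀ hρ hb₀ h
  obtain ⟨hE, hE'⟩ := int_exp ρ hρ
  have hum := h.meas
  set C := |c / 2 - 2 - Real.log (c / 2)| with hC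
  have hlog : IntegrableOn (fun t => Real.exp (-ρ * t) * Real.log (u t)) (Set.Ioi 0) := by
    refine Integrable.mono' ((hℓ.norm.add (hA.add (hE.mul_const C))).add (hx.const_mul (c / 2)))
      (by fun_prop) ?_
    filter_upwards [ae_restrict_mem measurableSet_Ioi] with t ht
    have hup := h.pos t
    have h1 := mul_le_mul_of_nonneg_left (log_bound (x := x t) (h.pos t) hc) (Real.exp_pos (-ρ * t)).le
    have h2 := mul_le_mul_of_nonneg_left (hℓu t ht) (Real.exp_pos (-ρ * t)).le
    rw [← hC] at h1
    simp only [Pi.add_apply, Real.norm_eq_abs]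
    have h3 := neg_abs_le (Real.exp (-ρ * t) * ℓ t)
    have h4 := abs_nonneg (Real.exp (-ρ * t) * ℓ t)
    have h5 : 0 ≤ Real.exp (-ρ * t) * (u t / (1 + x t ^ 2)) := by positivity
    have h6 : 0 ≤ Real.exp (-ρ * t) * C := by positivity
    have h7 : 0 ≤ c / 2 * (Real.exp (-ρ * t) * x t ^ 2) := by positivity
    rw [abs_le]
    constructor <;> linarith
  refine (Integrable.sub hlog (hx.const_mul c)).congr (ae_of_all _ fun t => ?_)
  simp only [Pi.sub_apply]; ring

lemma step1 {F : ℝ → ℝ} {x₀ b₀ ρ c K a : ℝ} {u x : ℝ → ℝ} (hF : GoodF F b₀) (hx₀ : 0 ≤ x₀)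
    (hρ : 0 < ρ) (hb₀ : 0 < b₀) (hc : 0 < c) (h : Nice F x₀ u x) (ho : ObjIntegrable ρ c u x)
    (hK : ∫ t in Set.Ioi (0:ℝ), Real.exp (-ρ * t) * x t ^ 2 ≤ K)
    (ha : 0 < a) (ha1 : a ≤ ρ) (ha2 : a * (c * (2 / ρ + K)) ≤ 1) :
    ∃ u' x', Nice F x₀ u' x' ∧ ObjIntegrable ρ c u' x' ∧
      objective ρ c u x ≤ objective ρ c u' x' ∧ ∀ t, 0 ≤ t → a * Real.exp (-ρ * t) ≤ u' t := by
  obtain ⟨hx2, hlog, -⟩ := obj_bound hF hx₀ hρ hb₀ hc h ho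
  obtain ⟨hE, hE'⟩ := int_exp ρ hρ
  have hum := h.meas
  have hxc := h.cont
  have hFc := hF.cont
  set η : ℝ → ℝ := fun t => a * Real.exp (-ρ * t) with hη
  have hηpos : ∀ t, 0 < η t := fun t => by positivity
  set d : ℝ → ℝ := (Set.Ici 0).indicator (fun t => max (η t - u t) 0) with hd
  have hdm : Measurable d := by
    refine Measurable.indicator ?_ measurableSet_Ici
    fun_prop
  have hd0 : ∀ t, 0 ≤ d t := fun t => Set.indicator_nonneg (fun t _ => le_max_right _ _) t
  have hdη : ∀ t, d t ≤ (Set.Ici 0).indicator η t := fun t => by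
    refine Set.indicator_le_indicator (max_le ?_ (hηpos t).le)
    linarith [h.pos t]
  have hdt : ∀ t, 0 ≤ t → d t = max (η t - u t) 0 := fun t ht => by
    rw [hd, Set.indicator_of_mem (show t ∈ Set.Ici 0 from ht)]
  have hηi : IntegrableOn η (Set.Ioi 0) := hE.const_mul a
  have hdi : Integrable d := by
    refine Integrable.mono' (g := (Set.Ici 0).indicator η) ?_ hdm.aestronglyMeasurable
      (ae_of_all _ fun t => by rw [Real.norm_of_nonneg (hd0 t)]; exact hdη t)
    rw [integrable_indicator_iff measurableSet_Ici, integrableOn_Ici_iff_integrableOn_Ioi]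
    exact hηi
  set Z := ∫ t in Set.Ioi (0:ℝ), d t with hZ
  have hZ0 : 0 ≤ Z := integral_nonneg hd0
  have hZ1 : Z ≤ 1 := by
    have h1 : Z ≤ ∫ t in Set.Ioi (0:ℝ), η t := by
      refine setIntegral_mono_on hdi.integrableOn hηi measurableSet_Ioi fun t ht => ?_
      rw [hdt t (le_of_lt ht)]
      refine max_le ?_ (hηpos t).le
      linarith [h.pos t]
    rw [hη, integral_const_mul, hE'] at h1
    refine h1.trans ?_
    rw [mul_one_div, div_le_one hρ]; exact ha1
  set z : ℝ → ℝ := fun t => ∫ s in (0:ℝ)..(max t 0), d s with hz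
  have hzt : ∀ t, 0 ≤ t → z t = ∫ s in (0:ℝ)..t, d s := fun t ht => by
    rw [hz]; simp only [max_eq_left ht]
  have hzc : Continuous z :=
    (intervalIntegral.continuous_primitive (fun a b => hdi.intervalIntegrable) 0).comp
      (by fun_prop : Continuous fun t : ℝ => max t 0)
  have hz0 : ∀ t, 0 ≤ z t := fun t =>
    intervalIntegral.integral_nonneg (le_max_right _ _) fun s _ => hd0 s
  have hzZ : ∀ t, z t ≤ Z := fun t => by
    rw [hz, hZ]; simp only
    rw [intervalIntegral.integral_of_le (le_max_right _ _)]
    exact setIntegral_mono_set hdi.integrableOn (ae_of_all _ hd0)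
      Set.Ioc_subset_Ioi_self.eventuallyLE
  set u' : ℝ → ℝ := fun t => u t + d t + (F (x t) - F (x t + z t)) with hu'
  have hu'ge : ∀ t, u t + d t ≤ u' t := fun t => by
    have := hF.anti (show x t ≤ x t + z t by linarith [hz0 t])
    simp only [hu']; linarith
  have hN : Nice F x₀ u' (fun t => x t + z t) := by
    refine ⟨by fun_prop, fun p q => ?_, fun t => ?_, by fun_prop, fun t ht => ?_⟩
    · exact ((h.int p q).add hdi.intervalIntegrable).add
        (Continuous.intervalIntegrable (by fun_prop) p q)
    · linarith [hu'ge t, h.pos t, hd0 t]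
    · have e : ∀ s, F (x s + z s) + u' s = (F (x s) + u s) + d s := fun s => by
        simp only [hu']; ring
      simp only [e]
      rw [intervalIntegral.integral_add (h.fint hF 0 t) hdi.intervalIntegrable, hzt t ht, h.eq t ht]
      ring
  have hx2' : IntegrableOn (fun t => Real.exp (-ρ * t) * (x t + z t) ^ 2) (Set.Ioi 0) := by
    refine Integrable.mono' ((hx2.const_mul 2).add (hE.const_mul 2)) (by fun_prop)
      (ae_of_all _ fun t => ?_)
    rw [Real.norm_of_nonneg (by positivity)]
    have h1 : (x t + z t) ^ 2 ≤ 2 * x t ^ 2 + 2 := by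
      nlinarith [sq_nonneg (x t - z t), hz0 t, hzZ t]
    have := mul_le_mul_of_nonneg_left h1 (Real.exp_pos (-ρ * t)).le
    simp only [Pi.add_apply]
    linarith
  have hlogge : ∀ t, 0 ≤ t → Real.log (u t) + d t / η t ≤ Real.log (u' t) := by
    intro t ht
    have hup := h.pos t
    have h1 := Real.log_le_log (by linarith [hd0 t]) (hu'ge t)
    refine le_trans ?_ h1
    rw [hdt t ht]
    rcases le_total (η t) (u t) with h2 | h2
    · rw [max_eq_right (by linarith)]; simp
    · rw [max_eq_left (by linarith)]
      have h3 := Real.log_le_sub_one_of_pos (div_pos hup (hηpos t))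
      rw [Real.log_div hup.ne' (hηpos t).ne'] at h3
      rw [add_sub_cancel, sub_div, div_self (hηpos t).ne']
      linarith
  have ho' : ObjIntegrable ρ c u' (fun t => x t + z t) :=
    obj_int hF hx₀ hρ hb₀ hc hN hx2' hlog fun t ht => by
      have := hlogge t (le_of_lt ht)
      have h2 : 0 ≤ d t / η t := div_nonneg (hd0 t) (hηpos t).le
      linarith
  refine ⟨u', _, hN, ho', ?_, fun t ht => ?_⟩
  · have hIntg : IntegrableOn (fun t => (Real.exp (-ρ * t) * (Real.log (u t) - c * (x t) ^ 2) + (1 / a) * d t)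
        - (c * Z) * (2 * Real.exp (-ρ * t) + Real.exp (-ρ * t) * x t ^ 2)) (Set.Ioi 0) :=
      (Integrable.add ho (hdi.integrableOn.const_mul _)).sub (((hE.const_mul 2).add hx2).const_mul _)
    have hmono := setIntegral_mono_on hIntg ho' measurableSet_Ioi (fun t (ht : 0 < t) => by
      have h1 := mul_le_mul_of_nonneg_left (hlogge t ht.le) (Real.exp_pos (-ρ * t)).le
      have h2 : Real.exp (-ρ * t) * (d t / η t) = 1 / a * d t := by
        rw [hη]; have := (Real.exp_pos (-ρ * t)).ne'; field_simp
      have hxn := h.nonneg hF hx₀ t ht.le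
      have h3 : (x t + z t) ^ 2 ≤ x t ^ 2 + Z * (2 + x t ^ 2) := by
        have h4 : z t * (2 + x t ^ 2) ≤ Z * (2 + x t ^ 2) :=
          mul_le_mul_of_nonneg_right (hzZ t) (by positivity)
        have h5 : z t * z t ≤ z t * 1 := mul_le_mul_of_nonneg_left ((hzZ t).trans hZ1) (hz0 t)
        have h6 : z t * (2 * x t) ≤ z t * (1 + x t ^ 2) :=
          mul_le_mul_of_nonneg_left (by nlinarith [sq_nonneg (x t - 1)]) (hz0 t)
        nlinarith
      have h7 := mul_le_mul_of_nonneg_left h3 (mul_pos hc (Real.exp_pos (-ρ * t))).le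
      rw [mul_add, h2] at h1
      linarith)
    rw [integral_sub (by exact (Integrable.add ho (hdi.integrableOn.const_mul _)))
        (by exact (((hE.const_mul 2).add hx2).const_mul _)),
      integral_add ho (by exact hdi.integrableOn.const_mul _), integral_const_mul, integral_const_mul,
      integral_add (by exact hE.const_mul 2) hx2, integral_const_mul, hE', ← hZ] at hmono
    have e1 : objective ρ c u x = ∫ t in Set.Ioi (0:ℝ), Real.exp (-ρ * t) * (Real.log (u t) - c * (x t) ^ 2) := rfl
    have e2 : objective ρ c u' (fun t => x t + z t) = ∫ t in Set.Ioi (0:ℝ), Real.exp (-ρ * t) * (Real.log (u' t) - c * (x t + z t) ^ 2) := rfl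
    rw [← e1, ← e2] at hmono
    have h8 : c * Z * (2 * (1 / ρ) + ∫ t in Set.Ioi (0:ℝ), Real.exp (-ρ * t) * x t ^ 2) ≤ 1 / a * Z := by
      have h9 : c * Z * (2 * (1 / ρ) + ∫ t in Set.Ioi (0:ℝ), Real.exp (-ρ * t) * x t ^ 2) ≤ c * Z * (2 * (1 / ρ) + K) :=
        mul_le_mul_of_nonneg_left (by linarith) (by positivity)
      refine h9.trans ?_
      have h10 : c * (2 / ρ + K) ≤ 1 / a := by rw [le_div_iff₀ ha]; linarith
      have := mul_le_mul_of_nonneg_right h10 hZ0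
      calc _ = c * (2 / ρ + K) * Z := by ring
        _ ≤ _ := this
    linarith
  · have h1 := hu'ge t
    rw [hdt t ht] at h1
    have := le_max_left (η t - u t) 0
    simp only [hη] at *
    linarith

lemma ac_exp (b T : ℝ) : AbsolutelyContinuousOnInterval (fun t => Real.exp (b * t)) 0 T :=
  ContDiffOn.absolutelyContinuousOnInterval
    (by fun_prop : ContDiff ℝ 1 (fun t => Real.exp (b * t))).contDiffOn

lemma step2 {F : ℝ → ℝ} {x₀ b₀ ρ c K a A : ℝ} {u x : ℝ → ℝ} (hF : GoodF F b₀) (hx₀ : 0 ≤ x₀)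
    (hρ : 0 < ρ) (hb₀ : 0 < b₀) (hc : 0 < c) (h : Nice F x₀ u x) (ho : ObjIntegrable ρ c u x)
    (hK : ∫ t in Set.Ioi (0:ℝ), Real.exp (-ρ * t) * x t ^ 2 ≤ K)
    (ha : 0 < a) (hu : ∀ t, 0 ≤ t → a * Real.exp (-ρ * t) ≤ u t)
    (hA1 : 1 ≤ A) (haA : a ≤ A)
    (hA2 : 2 * (1 + b₀) * Real.exp (2 * ρ + b₀) / (c * a) ≤ A) :
    ∃ u' x', Nice F x₀ u' x' ∧ ObjIntegrable ρ c u' x' ∧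
      objective ρ c u x ≤ objective ρ c u' x' ∧
      ∀ t, 0 ≤ t → a * Real.exp (-ρ * t) ≤ u' t ∧
        u' t ≤ (A + b₀ * ((1 + b₀) * (Real.exp ρ * (1 / ρ + K)))) * Real.exp (ρ * t) := by
  obtain ⟨hx2, hlog, -⟩ := obj_bound hF hx₀ hρ hb₀ hc h ho
  obtain ⟨hE, hE'⟩ := int_exp ρ hρ
  have hum := h.meas
  have hxc := h.cont
  have hFc := hF.cont
  have hxn := h.nonneg hF hx₀
  set N : ℝ → ℝ := fun t => A * Real.exp (ρ * t) with hN
  have hNpos : ∀ t, 0 < N t := fun t => by positivity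
  have hN1 : ∀ t, 0 ≤ t → 1 ≤ N t := fun t ht => by
    have : 1 ≤ Real.exp (ρ * t) := Real.one_le_exp (by positivity)
    simp only [hN]; nlinarith
  set d : ℝ → ℝ := (Set.Ici 0).indicator (fun t => max (u t - N t) 0) with hd
  have hdm : Measurable d := by
    refine Measurable.indicator ?_ measurableSet_Ici
    fun_prop
  have hd0 : ∀ t, 0 ≤ d t := fun t => Set.indicator_nonneg (fun t _ => le_max_right _ _) t
  have hdt : ∀ t, 0 ≤ t → d t = max (u t - N t) 0 := fun t ht => by
    rw [hd, Set.indicator_of_mem (show t ∈ Set.Ici 0 from ht)]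
  have hdu : ∀ t, d t < u t := fun t => by
    have := h.pos t
    by_cases ht : 0 ≤ t
    · rw [hdt t ht]; refine max_lt ?_ this; linarith [hNpos t]
    · rw [hd, Set.indicator_of_notMem (by simpa using ht)]; exact this
  have hdi : ∀ p q, IntervalIntegrable d volume p q := fun p q =>
    (h.int p q).mono_fun hdm.aestronglyMeasurable (ae_of_all _ fun t => by
      simp only
      rw [Real.norm_of_nonneg (hd0 t), Real.norm_of_nonneg (h.pos t).le]; exact (hdu t).le)
  set m : ℝ → ℝ := fun t => Real.exp (b₀ * t) * d t with hm
  have hmm : Measurable m := by fun_prop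
  have hm0 : ∀ t, 0 ≤ m t := fun t => mul_nonneg (Real.exp_pos _).le (hd0 t)
  have hmi : ∀ p q, IntervalIntegrable m volume p q := fun p q =>
    (hdi p q).continuousOn_mul (by fun_prop)
  set z : ℝ → ℝ := fun t => Real.exp (-b₀ * t) * ∫ s in (0:ℝ)..(max t 0), m s with hz
  have hzt : ∀ t, 0 ≤ t → z t = Real.exp (-b₀ * t) * ∫ s in (0:ℝ)..t, m s := fun t ht => by
    rw [hz]; simp only [max_eq_left ht]
  have hzc : Continuous z := by
    have := (intervalIntegral.continuous_primitive hmi 0).comp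
      (by fun_prop : Continuous fun t : ℝ => max t 0)
    exact Continuous.mul (by fun_prop) this
  have hz0 : ∀ t, 0 ≤ z t := fun t => mul_nonneg (Real.exp_pos _).le
    (intervalIntegral.integral_nonneg (le_max_right _ _) fun s _ => hm0 s)
  have hzeq : ∀ t, 0 ≤ t → ∫ s in (0:ℝ)..t, (d s - b₀ * z s) = z t := by
    intro t ht
    have hac : AbsolutelyContinuousOnInterval (fun t => Real.exp (-b₀ * t) * ∫ s in (0:ℝ)..t, m s) 0 t :=
      (ac_exp (-b₀) t).fun_mul
        ((hmi 0 t).absolutelyContinuousOnInterval_intervalIntegral (c := 0) (by simp))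
    have hder : ∀ᵐ t, HasDerivAt (fun t => Real.exp (-b₀ * t) * ∫ s in (0:ℝ)..t, m s)
        (Real.exp (-b₀ * t) * (-b₀ * 1) * (∫ s in (0:ℝ)..t, m s) + Real.exp (-b₀ * t) * m t) t := by
      filter_upwards [LocallyIntegrable.ae_hasDerivAt_integral (loc_of_int hmi)] with t ht
      exact (((hasDerivAt_id t).const_mul (-b₀)).exp).mul (ht 0)
    have := ac_ftc hac hder
    rw [hzt t ht]
    simp only [intervalIntegral.integral_same, mul_zero, sub_zero] at this
    rw [← this]
    refine intervalIntegral.integral_congr fun s hs => ?_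
    rw [Set.uIcc_of_le ht] at hs
    rw [hzt s hs.1, hm]
    have e : Real.exp (-b₀ * s) * (Real.exp (b₀ * s) * d s) = d s := by
      rw [← mul_assoc, ← Real.exp_add]; simp
    simp only [e]; ring
  set u' : ℝ → ℝ := fun t => u t - d t + b₀ * z t + (F (x t) - F (x t - z t)) with hu'
  have hu'ge : ∀ t, u t - d t ≤ u' t := fun t => by
    have := hF.lip (x t - z t) (x t) (by linarith [hz0 t])
    simp only [hu']; linarith
  have hu'le : ∀ t, u' t ≤ u t - d t + b₀ * z t := fun t => by
    have := hF.anti (show x t - z t ≤ x t by linarith [hz0 t])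
    simp only [hu']; linarith
  have hNice : Nice F x₀ u' (fun t => x t - z t) := by
    refine ⟨by fun_prop, fun p q => ?_, fun t => ?_, by fun_prop, fun t ht => ?_⟩
    · refine (((h.int p q).sub (hdi p q)).add ?_).add ?_ <;>
        exact (Continuous.intervalIntegrable (by fun_prop) p q)
    · linarith [hu'ge t, hdu t]
    · have e : ∀ s, F (x s - z s) + u' s = (F (x s) + u s) - (d s - b₀ * z s) := fun s => by
        simp only [hu']; ring
      simp only [e]
      rw [intervalIntegral.integral_sub (h.fint hF 0 t)
        ((hdi 0 t).sub (Continuous.intervalIntegrable (by fun_prop) 0 t)), hzeq t ht, h.eq t ht]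
      ring
  have hzx : ∀ t, 0 ≤ t → z t ≤ x t := fun t ht => by
    have := hNice.nonneg hF hx₀ t ht
    linarith
  have hx2' : IntegrableOn (fun t => Real.exp (-ρ * t) * (x t - z t) ^ 2) (Set.Ioi 0) := by
    refine Integrable.mono' hx2 (by fun_prop) ?_
    filter_upwards [ae_restrict_mem measurableSet_Ioi] with t ht
    have ht : 0 ≤ t := le_of_lt ht
    rw [Real.norm_of_nonneg (by positivity)]
    refine mul_le_mul_of_nonneg_left ?_ (Real.exp_pos _).le
    nlinarith [hz0 t, hzx t ht, hxn t ht]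
  have hud : ∀ t, 0 ≤ t → u t - d t = min (u t) (N t) := fun t ht => by
    rw [hdt t ht]
    rcases le_total (u t) (N t) with h1 | h1
    · rw [max_eq_right (by linarith), min_eq_left h1]; ring
    · rw [max_eq_left (by linarith), min_eq_right h1]; ring
  have hloglow : ∀ t, 0 < t → -|Real.log (u t)| ≤ Real.log (u' t) := by
    intro t ht
    have h1 := hu'ge t
    have hup := h.pos t
    rw [hud t ht.le] at h1
    have h2 := Real.log_le_log (lt_min hup (hNpos t)) h1
    refine le_trans ?_ h2
    rcases le_total (u t) (N t) with h3 | h3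
    · rw [min_eq_left h3]; exact neg_abs_le _
    · rw [min_eq_right h3]
      have := Real.log_nonneg (hN1 t ht.le)
      linarith [abs_nonneg (Real.log (u t))]
  have hlogge : ∀ t, 0 ≤ t → Real.log (u t) - d t / N t ≤ Real.log (u' t) := by
    intro t ht
    have h1 := hu'ge t
    have hup := h.pos t
    rw [hud t ht] at h1
    have h2 := Real.log_le_log (lt_min hup (hNpos t)) h1
    refine le_trans ?_ h2
    rw [hdt t ht]
    rcases le_total (u t) (N t) with h3 | h3
    · rw [max_eq_right (by linarith), min_eq_left h3]; simp
    · rw [max_eq_left (by linarith), min_eq_right h3]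
      have h4 := Real.log_le_sub_one_of_pos (div_pos hup (hNpos t))
      rw [Real.log_div hup.ne' (hNpos t).ne'] at h4
      rw [sub_div, div_self (hNpos t).ne']
      linarith
  have ho' : ObjIntegrable ρ c u' (fun t => x t - z t) := by
    refine obj_int (ℓ := fun t => -|Real.log (u t)|) hF hx₀ hρ hb₀ hc hNice hx2' ?_ hloglow
    refine hlog.norm.neg.congr (ae_of_all _ fun t => ?_)
    simp [abs_mul]
  refine ⟨u', _, hNice, ho', ?_, fun t ht => ⟨?_, ?_⟩⟩
  · set Φ : ℝ → ℝ := fun t => c * (Real.exp (-(ρ + b₀) * t) * x t) with hΦ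
    have hΦM : ∀ t, 0 ≤ t → Φ t * (∫ s in (0:ℝ)..t, m s) = c * (Real.exp (-ρ * t) * (z t * x t)) := by
      intro t ht
      rw [hzt t ht, hΦ]
      have : Real.exp (-(ρ + b₀) * t) = Real.exp (-ρ * t) * Real.exp (-b₀ * t) := by
        rw [← Real.exp_add]; congr 1; ring
      simp only [this]; ring
    have hzxi : IntegrableOn (fun t => c * (Real.exp (-ρ * t) * (z t * x t))) (Set.Ioi 0) := by
      refine Integrable.const_mul (Integrable.mono' hx2 (by fun_prop) ?_) c
      filter_upwards [ae_restrict_mem measurableSet_Ioi] with t ht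
      have ht : 0 ≤ t := le_of_lt ht
      have h1 := hxn t ht
      have h2 := hz0 t
      rw [Real.norm_of_nonneg (by positivity), pow_two]
      exact mul_le_mul_of_nonneg_left (mul_le_mul_of_nonneg_right (hzx t ht) h1) (Real.exp_pos _).le
    have hΦi : IntegrableOn (fun t => Φ t * ∫ s in (0:ℝ)..t, m s) (Set.Ioi 0) := by
      refine hzxi.congr ?_
      filter_upwards [ae_restrict_mem measurableSet_Ioi] with t ht
      exact (hΦM t (le_of_lt ht)).symm
    have hton := tonelli (m := m) (Φ := Φ) (k := fun s => Real.exp (-(2 * ρ + b₀) * s) / A) hmm hm0 hmi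
      (by fun_prop) (fun t ht => by have := hxn t ht; positivity) (by fun_prop)
      (fun t => by positivity) (fun s hs => by
        have hw := win_lower hF hx₀ hb₀ h s (a * Real.exp (-ρ * (s + 1))) hs.le (fun r hr => by
          refine le_trans ?_ (hu r (hs.le.trans hr.1))
          refine mul_le_mul_of_nonneg_left (Real.exp_le_exp.2 ?_) ha.le
          nlinarith [hr.2])
        have h1 : ∫ t in s..(s+1), (c * Real.exp (-(ρ + b₀) * (s + 1))) * x t ≤ ∫ t in s..(s+1), Φ t := by
          refine intervalIntegral.integral_mono_on (by linarith)
            (Continuous.intervalIntegrable (by fun_prop) _ _)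
            (Continuous.intervalIntegrable (by fun_prop) _ _) fun t ht => ?_
          rw [hΦ, mul_assoc]
          refine mul_le_mul_of_nonneg_left (mul_le_mul_of_nonneg_right (Real.exp_le_exp.2 ?_)
            (hxn t (hs.le.trans ht.1))) hc.le
          nlinarith [ht.2]
        rw [intervalIntegral.integral_const_mul] at h1
        refine le_trans ?_ h1
        have h2 : a * Real.exp (-ρ * (s + 1)) / 2 / (1 + b₀) ≤ ∫ r in s..(s+1), x r := by
          rw [div_le_iff₀ (by positivity)]; linarith
        refine le_trans ?_ (mul_le_mul_of_nonneg_left h2 (by positivity))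
        have h3 : Real.exp (-(ρ + b₀) * (s + 1)) * Real.exp (-ρ * (s + 1)) =
            Real.exp (-(2 * ρ + b₀) * s) * (Real.exp (2 * ρ + b₀))⁻¹ := by
          rw [← Real.exp_neg, ← Real.exp_add, ← Real.exp_add]; congr 1; ring
        have h4 : c * Real.exp (-(ρ + b₀) * (s + 1)) * (a * Real.exp (-ρ * (s + 1)) / 2 / (1 + b₀))
            = Real.exp (-(2 * ρ + b₀) * s) / (2 * (1 + b₀) * Real.exp (2 * ρ + b₀) / (c * a)) := by
          calc _ = c * a / 2 / (1 + b₀) * (Real.exp (-(ρ + b₀) * (s + 1)) * Real.exp (-ρ * (s + 1))) := by ring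
            _ = _ := by rw [h3]; field_simp
        rw [h4]
        exact div_le_div_of_nonneg_left (Real.exp_pos _).le (by positivity) hA2) hΦi
    have hmk : ∀ t, m t * (Real.exp (-(2 * ρ + b₀) * t) / A) = Real.exp (-ρ * t) * (d t / N t) := by
      intro t
      simp only [hm, hN]
      have e1 : Real.exp (-(2 * ρ + b₀) * t) = Real.exp (-ρ * t) / (Real.exp (b₀ * t) * Real.exp (ρ * t)) := by
        rw [← Real.exp_add, ← Real.exp_sub]; congr 1; ring
      rw [e1]; field_simp
    simp only [hmk] at hton
    obtain ⟨hti, htle⟩ := hton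
    rw [setIntegral_congr_fun measurableSet_Ioi (fun t (ht : 0 < t) => hΦM t ht.le)] at htle
    have hIntg : IntegrableOn (fun t => (Real.exp (-ρ * t) * (Real.log (u t) - c * (x t) ^ 2)
        + c * (Real.exp (-ρ * t) * (z t * x t))) - Real.exp (-ρ * t) * (d t / N t)) (Set.Ioi 0) :=
      (Integrable.add ho hzxi).sub hti
    have hmono := setIntegral_mono_on hIntg ho' measurableSet_Ioi (fun t (ht : 0 < t) => by
      have h1 := mul_le_mul_of_nonneg_left (hlogge t ht.le) (Real.exp_pos (-ρ * t)).le
      have h3 : (x t - z t) ^ 2 ≤ x t ^ 2 - z t * x t := by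
        nlinarith [hz0 t, hzx t ht.le]
      have h7 := mul_le_mul_of_nonneg_left h3 (mul_pos hc (Real.exp_pos (-ρ * t))).le
      linarith)
    rw [integral_sub (by exact Integrable.add ho hzxi) hti, integral_add ho hzxi] at hmono
    have e1 : objective ρ c u x = ∫ t in Set.Ioi (0:ℝ), Real.exp (-ρ * t) * (Real.log (u t) - c * (x t) ^ 2) := rfl
    have e2 : objective ρ c u' (fun t => x t - z t) = ∫ t in Set.Ioi (0:ℝ), Real.exp (-ρ * t) * (Real.log (u' t) - c * (x t - z t) ^ 2) := rfl
    rw [← e1, ← e2] at hmono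
    linarith
  · refine le_trans ?_ (hu'ge t)
    rw [hud t ht]
    refine le_min (hu t ht) ?_
    refine mul_le_mul haA (Real.exp_le_exp.2 (by nlinarith)) (Real.exp_pos _).le (by linarith)
  · have h1 := hu'le t
    rw [hud t ht] at h1
    have h2 := min_le_right (u t) (N t)
    have h3 := win_upper hF hx₀ hb₀ h t ht
    have h4 : ∫ r in t..(t+1), x r ≤ Real.exp (ρ * (t + 1)) * (1 / ρ + K) := by
      have hi : IntegrableOn (fun r => Real.exp (-ρ * r) + Real.exp (-ρ * r) * x r ^ 2) (Set.Ioi 0) := hE.add hx2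
      calc ∫ r in t..(t+1), x r ≤ ∫ r in t..(t+1), Real.exp (ρ * (t + 1)) *
            (Real.exp (-ρ * r) + Real.exp (-ρ * r) * x r ^ 2) := by
            refine intervalIntegral.integral_mono_on (by linarith) (hxc.intervalIntegrable _ _)
              (Continuous.intervalIntegrable (by fun_prop) _ _) fun r hr => ?_
            have h5 : x r ≤ 1 + x r ^ 2 := by nlinarith [sq_nonneg (x r - 1), sq_nonneg (x r)]
            have h6 : 1 ≤ Real.exp (ρ * (t + 1)) * Real.exp (-ρ * r) := by
              rw [← Real.exp_add]; apply Real.one_le_exp; nlinarith [hr.2]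
            have h7 : 0 ≤ 1 + x r ^ 2 := by positivity
            nlinarith
        _ = Real.exp (ρ * (t + 1)) * ∫ r in Set.Ioc t (t+1), (Real.exp (-ρ * r) + Real.exp (-ρ * r) * x r ^ 2) := by
            rw [intervalIntegral.integral_const_mul, intervalIntegral.integral_of_le (by linarith)]
        _ ≤ Real.exp (ρ * (t + 1)) * ∫ r in Set.Ioi (0:ℝ), (Real.exp (-ρ * r) + Real.exp (-ρ * r) * x r ^ 2) := by
            refine mul_le_mul_of_nonneg_left ?_ (Real.exp_pos _).le
            refine setIntegral_mono_set hi (ae_of_all _ fun r => ?_) ?_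
            · simp only [Pi.zero_apply]; positivity
            · exact HasSubset.Subset.eventuallyLE (fun r hr => lt_of_le_of_lt ht hr.1)
        _ ≤ _ := by
            refine mul_le_mul_of_nonneg_left ?_ (Real.exp_pos _).le
            rw [integral_add hE hx2, hE']; linarith
    have h5 : Real.exp (ρ * (t + 1)) = Real.exp ρ * Real.exp (ρ * t) := by
      rw [← Real.exp_add]; congr 1; ring
    rw [h5] at h4
    have h6 : z t ≤ (1 + b₀) * (Real.exp ρ * Real.exp (ρ * t) * (1 / ρ + K)) :=
      (hzx t ht).trans (h3.trans (mul_le_mul_of_nonneg_left h4 (by positivity)))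
    have h7 := mul_le_mul_of_nonneg_left h6 hb₀.le
    simp only [hN] at h2
    calc u' t ≤ A * Real.exp (ρ * t) + b₀ * ((1 + b₀) * (Real.exp ρ * Real.exp (ρ * t) * (1 / ρ + K))) := by linarith
      _ = _ := by ring

lemma exists_nice {F : ℝ → ℝ} {x₀ ρ c : ℝ} {u x : ℝ → ℝ}
    (hu : Admissible u) (hx : Trajectory F x₀ u x) (ho : ObjIntegrable ρ c u x) :
    ∃ u' x', Nice F x₀ u' x' ∧ ObjIntegrable ρ c u' x' ∧
      objective ρ c u' x' = objective ρ c u x := by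
  obtain ⟨hm, hi, hp⟩ := hu
  obtain ⟨hxc, hxe⟩ := hx
  set u' : ℝ → ℝ := fun t => if 0 ≤ t ∧ 0 < u t then u t else 1 with hu'
  set x' : ℝ → ℝ := fun t => x (max t 0) with hx'
  have hset : MeasurableSet {t : ℝ | 0 ≤ t ∧ 0 < u t} :=
    (measurableSet_le measurable_const measurable_id).inter (measurableSet_lt measurable_const hm)
  have hum : Measurable u' := Measurable.ite hset hm measurable_const
  have hxx : ∀ t, 0 ≤ t → x' t = x t := fun t ht => by simp only [hx', max_eq_left ht]
  have hae : ∀ᵐ t, 0 ≤ t → u' t = u t := by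
    have := (ae_restrict_iff' measurableSet_Ici).1 hp
    filter_upwards [this] with t ht h0
    simp only [hu']
    rw [if_pos ⟨h0, ht h0⟩]
  have hIntg : (fun t => Real.exp (-ρ * t) * (Real.log (u' t) - c * (x' t) ^ 2))
      =ᵐ[volume.restrict (Set.Ioi 0)]
      (fun t => Real.exp (-ρ * t) * (Real.log (u t) - c * (x t) ^ 2)) := by
    filter_upwards [ae_restrict_of_ae hae, ae_restrict_mem measurableSet_Ioi] with t h1 h2
    have h2 : 0 ≤ t := le_of_lt h2
    rw [h1 h2, hxx t h2]
  refine ⟨u', x', ⟨hum, ?_, ?_, ?_, ?_⟩, ?_, ?_⟩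
  · have key : ∀ R : ℝ, 0 < R → IntegrableOn u' (Set.Icc (-R) R) := by
      intro R hR
      have h1 : IntegrableOn (Set.indicator (Set.Icc 0 R) u) (Set.Icc (-R) R) :=
        ((integrable_indicator_iff measurableSet_Icc).2 (hi R hR)).integrableOn
      have h2 : IntegrableOn (fun _ : ℝ => (1:ℝ)) (Set.Icc (-R) R) := by
        exact (continuous_const).integrableOn_Icc
      refine Integrable.mono' (h1.norm.add h2) hum.aestronglyMeasurable ?_
      filter_upwards [ae_restrict_mem measurableSet_Icc] with t ht
      simp only [Pi.add_apply]
      by_cases hc : 0 ≤ t ∧ 0 < u t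
      · have : u' t = u t := by simp only [hu']; rw [if_pos hc]
        rw [this, Set.indicator_of_mem (show t ∈ Set.Icc 0 R from ⟨hc.1, ht.2⟩)]
        linarith
      · have : u' t = 1 := by simp only [hu']; rw [if_neg hc]
        rw [this]; simp
    intro a b
    rw [intervalIntegrable_iff]
    refine (key (|a| + |b| + 1) (by positivity)).mono_set fun t ht => ?_
    have := Set.uIoc_subset_uIcc ht
    rw [Set.mem_uIcc] at this
    have := neg_abs_le a
    have := neg_abs_le b
    have := le_abs_self a
    have := le_abs_self b
    have := abs_nonneg a
    have := abs_nonneg b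
    constructor <;> rcases ‹_ ∨ _› with h | h <;> linarith [h.1, h.2]
  · intro t
    simp only [hu']
    split_ifs with h
    · exact h.2
    · exact one_pos
  · exact hxc.comp_continuous (by fun_prop) (fun t => Set.mem_Ici.2 (le_max_right _ _))
  · intro t ht
    rw [hxx t ht, hxe t ht]
    congr 1
    refine intervalIntegral.integral_congr_ae ?_
    filter_upwards [hae] with s hs hst
    rw [Set.uIoc_of_le ht] at hst
    rw [hs hst.1.le, hxx s hst.1.le]
  · exact ho.congr hIntg.symm
  · exact integral_congr_ae hIntg

lemma Nice.adm {F : ℝ → ℝ} {x₀ : ℝ} {u x : ℝ → ℝ} (h : Nice F x₀ u x) :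
    Admissible u ∧ Trajectory F x₀ u x :=
  ⟨⟨h.meas, fun T hT => (intervalIntegrable_iff_integrableOn_Icc_of_le hT.le).1 (h.int 0 T),
    Eventually.of_forall h.pos⟩, h.cont.continuousOn, h.eq⟩

/-- Existence of a locally uniformly bounded maximizing sequence converging
weakly in every `L¹([0,T])` to an admissible control. -/
theorem diagonal_maximizing_sequence
    (ρ c x₀ b₀ l V : ℝ) (F : ℝ → ℝ)
    (hρ : 0 < ρ) (hc : 0 < c) (hx₀ : 0 ≤ x₀) (hb₀ : 0 < b₀) (hl : 0 < l)
    (hF : ContDiff ℝ 1 F) (hF0 : F 0 = 0) (hF'0 : deriv F 0 < 0)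
    (hF' : ∀ y : ℝ, -b₀ ≤ deriv F y ∧ deriv F y ≤ 0)
    (hFlim : Tendsto (deriv F) atTop (nhds (-l)))
    (hV : IsLUB {r : ℝ | ∃ u x : ℝ → ℝ, Admissible u ∧ Trajectory F x₀ u x ∧
            ObjIntegrable ρ c u x ∧ objective ρ c u x = r} V) :
    ∃ (v : ℕ → ℝ → ℝ) (vl : ℝ → ℝ) (xs : ℕ → ℝ → ℝ) (η N : ℕ → ℝ),
      (∀ n : ℕ, Admissible (v n) ∧ Trajectory F x₀ (v n) (xs n) ∧
        ObjIntegrable ρ c (v n) (xs n)) ∧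
      Admissible vl ∧
      (∀ T : ℕ, 0 < η T ∧ η T ≤ N T) ∧
      Tendsto (fun n => objective ρ c (v n) (xs n)) atTop (nhds V) ∧
      (∀ T : ℝ, 0 < T → ∀ g : ℝ → ℝ, Measurable g →
        (∃ C : ℝ, ∀ t ∈ Set.Icc (0:ℝ) T, |g t| ≤ C) →
        Tendsto (fun n => ∫ t in Set.Icc (0:ℝ) T, v n t * g t) atTop
          (nhds (∫ t in Set.Icc (0:ℝ) T, vl t * g t))) ∧
      (∀ T : ℕ, ∀ᵐ t ∂(volume.restrict (Set.Icc (0:ℝ) (T:ℝ))),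
        (η T ≤ vl t ∧ vl t ≤ N T) ∧
        ∀ n : ℕ, T ≤ n → η T ≤ v n t ∧ v n t ≤ N T) := by
  have hG := goodF F b₀ hF hF0 hF'
  obtain ⟨K, hK0, hK⟩ : ∃ K : ℝ, 0 ≤ K ∧ ∀ u x : ℝ → ℝ, Nice F x₀ u x → ObjIntegrable ρ c u x →
      V - 1 ≤ objective ρ c u x →
      ∫ t in Set.Ioi (0:ℝ), Real.exp (-ρ * t) * x t ^ 2 ≤ K := by
    refine ⟨max 0 (2 / c * (Real.pi + b₀ / ρ + |c / 2 - 2 - Real.log (c / 2)| / ρ - (V - 1))),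
      le_max_left _ _, fun u x h ho hv => le_max_of_le_right ?_⟩
    obtain ⟨-, -, hb⟩ := obj_bound hG hx₀ hρ hb₀ hc h ho
    calc ∫ t in Set.Ioi (0:ℝ), Real.exp (-ρ * t) * x t ^ 2
        = 2 / c * (c / 2 * ∫ t in Set.Ioi (0:ℝ), Real.exp (-ρ * t) * x t ^ 2) := by
          field_simp
      _ ≤ _ := mul_le_mul_of_nonneg_left (by linarith) (by positivity)
  have hD : 0 < c * (2 / ρ + K) := by positivity
  obtain ⟨a, ha, ha1, ha2⟩ : ∃ a : ℝ, 0 < a ∧ a ≤ ρ ∧ a * (c * (2 / ρ + K)) ≤ 1 := by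
    refine ⟨min ρ (1 / (c * (2 / ρ + K))), lt_min hρ (by positivity), min_le_left _ _, ?_⟩
    rw [← le_div_iff₀ hD]
    exact min_le_right _ _
  obtain ⟨A, hA1, haA, hA2⟩ : ∃ A : ℝ, 1 ≤ A ∧ a ≤ A ∧
      2 * (1 + b₀) * Real.exp (2 * ρ + b₀) / (c * a) ≤ A :=
    ⟨max (max 1 a) (2 * (1 + b₀) * Real.exp (2 * ρ + b₀) / (c * a)),
      (le_max_left _ _).trans (le_max_left _ _), (le_max_right _ _).trans (le_max_left _ _),
      le_max_right _ _⟩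
  set A' := A + b₀ * ((1 + b₀) * (Real.exp ρ * (1 / ρ + K))) with hA'
  have hA'0 : 0 ≤ A' := by positivity
  have hex : ∀ n : ℕ, ∃ u x : ℝ → ℝ, Nice F x₀ u x ∧ ObjIntegrable ρ c u x ∧
      V - 1 / ((n:ℝ) + 1) ≤ objective ρ c u x ∧
      ∀ t, 0 ≤ t → a * Real.exp (-ρ * t) ≤ u t ∧ u t ≤ A' * Real.exp (ρ * t) := by
    intro n
    have hn : 0 < 1 / ((n:ℝ) + 1) := by positivity
    have hn1 : 1 / ((n:ℝ) + 1) ≤ 1 := by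
      rw [div_le_one (by positivity)]
      linarith [Nat.cast_nonneg (α := ℝ) n]
    obtain ⟨r, ⟨u, x, hu, hx, ho, hr⟩, hr1, -⟩ :=
      hV.exists_between (show V - 1 / ((n:ℝ) + 1) < V by linarith)
    obtain ⟨u1, x1, h1, ho1, e1⟩ := exists_nice hu hx ho
    obtain ⟨u2, x2, h2, ho2, e2, hb2⟩ := step1 hG hx₀ hρ hb₀ hc h1 ho1
      (hK u1 x1 h1 ho1 (by linarith)) ha ha1 ha2
    obtain ⟨u3, x3, h3, ho3, e3, hb3⟩ := step2 hG hx₀ hρ hb₀ hc h2 ho2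
      (hK u2 x2 h2 ho2 (by linarith)) ha hb2 hA1 haA hA2
    exact ⟨u3, x3, h3, ho3, by linarith, hb3⟩
  choose v xs hN hO hval hbd using hex
  obtain ⟨vl, φ, hφ, hvm, hvb, hw⟩ := weak_compact v a A' ρ hρ ha (fun n => (hN n).meas) hbd
  have hT : Tendsto (fun n => objective ρ c (v n) (xs n)) atTop (nhds V) := by
    have h0 : Tendsto (fun n : ℕ => V - 1 / ((n:ℝ) + 1)) atTop (nhds V) := by
      simpa using (tendsto_const_nhds (x := V)).sub (tendsto_one_div_add_atTop_nhds_zero_nat (𝕜 := ℝ))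
    exact tendsto_of_tendsto_of_tendsto_of_le_of_le h0 tendsto_const_nhds hval
      (fun n => hV.1 ⟨v n, xs n, (hN n).adm.1, (hN n).adm.2, hO n, rfl⟩)
  have hmono : ∀ (w : ℝ → ℝ) (T t : ℝ), 
      (a * Real.exp (-ρ * t) ≤ w t ∧ w t ≤ A' * Real.exp (ρ * t)) → t ≤ T →
      a * Real.exp (-ρ * T) ≤ w t ∧ w t ≤ A' * Real.exp (ρ * T) := by
    intro w T t hw ht
    have h1 : Real.exp (-ρ * T) ≤ Real.exp (-ρ * t) := Real.exp_le_exp.2 (by nlinarith)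
    have h2 : Real.exp (ρ * t) ≤ Real.exp (ρ * T) := Real.exp_le_exp.2 (by nlinarith)
    exact ⟨(mul_le_mul_of_nonneg_left h1 ha.le).trans hw.1,
      hw.2.trans (mul_le_mul_of_nonneg_left h2 hA'0)⟩
  refine ⟨fun n => v (φ n), vl, fun n => xs (φ n), fun T => a * Real.exp (-ρ * T),
    fun T => A' * Real.exp (ρ * T), fun n => ⟨(hN _).adm.1, (hN _).adm.2, hO _⟩,
    ⟨hvm, fun T hT => ?_, ?_⟩, fun T => ⟨by positivity, ?_⟩, hT.comp hφ.tendsto_atTop, hw,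
    fun T => ?_⟩
  · have hc : IntegrableOn (fun t => A' * Real.exp (ρ * t)) (Set.Icc 0 T) :=
      Continuous.integrableOn_Icc (by fun_prop)
    refine Integrable.mono' hc hvm.aestronglyMeasurable ?_
    filter_upwards [ae_restrict_mem measurableSet_Icc] with t ht
    have := hvb t ht.1
    rw [Real.norm_of_nonneg (le_trans (by positivity) this.1)]
    exact this.2
  · filter_upwards [ae_restrict_mem measurableSet_Ici] with t ht
    exact lt_of_lt_of_le (by positivity) (hvb t ht).1
  · exact (hvb T (Nat.cast_nonneg T)).1.trans (hvb T (Nat.cast_nonneg T)).2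
  · filter_upwards [ae_restrict_mem measurableSet_Icc] with t ht
    exact ⟨hmono vl T t (hvb t ht.1) ht.2, fun n _ => hmono (v (φ n)) T t (hbd _ t ht.1) ht.2⟩
end
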